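/- arXiv:2311.10465 — 11 statements merged into one kernel-verified Lean document; each statement's English description precedes it below -/
import Mathlib

section
/- Let d ≥ 1, let ρ, ρ̄ : ℝ^d × ℝ → ℝ be continuously differentiable and strictly positive, and let u, ū : ℝ^d × ℝ → ℝ^d be continuously differentiable vector fields satisfying the transport equations ∂_t ρ + div(ρu) = 0 and ∂_t ρ̄ + div(ρ̄ū) = 0. Then the pointwise identity ∂_t(ρ ln ρ̄) + div(ρ (ln ρ̄) u + ρ ū) + ∇ln(ρ̄/ρ) · (ρ ū) − ∇ln ρ̄ · (ρ u) = 0 holds. -/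
/-!
By the product and chain rules, the left-hand side of the identity equals
`ln ρ̄ · (∂_t ρ + div(ρu)) + (ρ/ρ̄) · (∂_t ρ̄ + div(ρ̄ū))`, and both brackets vanish by the
transport equations. Positivity of `ρ` and `ρ̄` makes the logarithms differentiable, and the
`ρ ∇ln ρ̄ · u` and `∇ρ · ū` contributions cancel.
-/

/-- Partial derivative in time of a scalar field `f(x,t)`. -/
noncomputable def ptime {d : ℕ} (f : (Fin d → ℝ) → ℝ → ℝ) (x : Fin d → ℝ) (t : ℝ) : ℝ :=
  deriv (f x) t

/-- `α`-th component of the spatial gradient of a scalar field `f(x,t)`. -/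
noncomputable def pgrad {d : ℕ} (f : (Fin d → ℝ) → ℝ → ℝ) (x : Fin d → ℝ) (t : ℝ)
    (α : Fin d) : ℝ :=
  fderiv ℝ (fun y => f y t) x (Pi.single α 1)

/-- Spatial divergence of a vector field `F(x,t)`. -/
noncomputable def pdiv {d : ℕ} (F : (Fin d → ℝ) → ℝ → Fin d → ℝ) (x : Fin d → ℝ)
    (t : ℝ) : ℝ :=
  ∑ α, fderiv ℝ (fun y => F y t α) x (Pi.single α 1)

/-- for two C¹ strictly positive solutions `(ρ,u)`, `(ρ̄,ū)` of the
transport equation `∂_t ρ + div(ρu) = 0`, the pointwise identity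
`∂_t(ρ ln ρ̄) + div(ρ (ln ρ̄) u + ρ ū) + ∇ln(ρ̄/ρ)·(ρ ū) − ∇ln ρ̄·(ρ u) = 0` holds. -/
theorem transport_cross_entropy_identity {d : ℕ} (hd : 1 ≤ d)
    (ρ ρbar : (Fin d → ℝ) → ℝ → ℝ)
    (u ubar : (Fin d → ℝ) → ℝ → Fin d → ℝ)
    (hρ : ContDiff ℝ 1 (fun p : (Fin d → ℝ) × ℝ => ρ p.1 p.2))
    (hρbar : ContDiff ℝ 1 (fun p : (Fin d → ℝ) × ℝ => ρbar p.1 p.2))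
    (hu : ContDiff ℝ 1 (fun p : (Fin d → ℝ) × ℝ => u p.1 p.2))
    (hubar : ContDiff ℝ 1 (fun p : (Fin d → ℝ) × ℝ => ubar p.1 p.2))
    (hρpos : ∀ x t, 0 < ρ x t) (hρbarpos : ∀ x t, 0 < ρbar x t)
    (htrans : ∀ x t, ptime ρ x t + pdiv (fun y s α => ρ y s * u y s α) x t = 0)
    (htransbar : ∀ x t, ptime ρbar x t + pdiv (fun y s α => ρbar y s * ubar y s α) x t = 0) :
    ∀ x t,
      ptime (fun y s => ρ y s * Real.log (ρbar y s)) x t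
        + pdiv (fun y s α =>
            ρ y s * Real.log (ρbar y s) * u y s α + ρ y s * ubar y s α) x t
        + (∑ α, pgrad (fun y s => Real.log (ρbar y s) - Real.log (ρ y s)) x t α *
            (ρ x t * ubar x t α))
        - (∑ α, pgrad (fun y s => Real.log (ρbar y s)) x t α * (ρ x t * u x t α)) = 0 := by
  intro x t
  -- spatial and temporal slices of the C¹ fields are differentiable
  have hsl : Differentiable ℝ (fun y : Fin d → ℝ => (y, t)) := by fun_prop
  have htl : Differentiable ℝ (fun s : ℝ => (x, s)) := by fun_prop
  have dρ : DifferentiableAt ℝ (fun y => ρ y t) x :=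
    ((hρ.differentiable one_ne_zero).comp hsl) x
  have dρbar : DifferentiableAt ℝ (fun y => ρbar y t) x :=
    ((hρbar.differentiable one_ne_zero).comp hsl) x
  have du : ∀ α, DifferentiableAt ℝ (fun y => u y t α) x :=
    differentiableAt_pi.1 (((hu.differentiable one_ne_zero).comp hsl) x)
  have dubar : ∀ α, DifferentiableAt ℝ (fun y => ubar y t α) x :=
    differentiableAt_pi.1 (((hubar.differentiable one_ne_zero).comp hsl) x)
  have tρ : DifferentiableAt ℝ (ρ x) t :=
    ((hρ.differentiable one_ne_zero).comp htl) t
  have tρbar : DifferentiableAt ℝ (ρbar x) t :=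
    ((hρbar.differentiable one_ne_zero).comp htl) t
  have h0 : ρ x t ≠ 0 := (hρpos x t).ne'
  have h1 : ρbar x t ≠ 0 := (hρbarpos x t).ne'
  have e1 := htrans x t
  have e2 := htransbar x t
  have hT : ptime (fun y s => ρ y s * Real.log (ρbar y s)) x t
      = ptime ρ x t * Real.log (ρbar x t) + ρ x t * (ptime ρbar x t / ρbar x t) :=
    (tρ.hasDerivAt.mul (tρbar.hasDerivAt.log h1)).deriv
  have hL := dρbar.hasFDerivAt.log h1
  have hL' := dρ.hasFDerivAt.log h0
  have hgb : ∀ α, pgrad (fun y s => Real.log (ρbar y s)) x t α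
      = (ρbar x t)⁻¹ * pgrad ρbar x t α := fun α => by
    simp only [pgrad]
    rw [hL.fderiv]
    simp
  have hg : ∀ α, pgrad (fun y s => Real.log (ρbar y s) - Real.log (ρ y s)) x t α
      = (ρbar x t)⁻¹ * pgrad ρbar x t α - (ρ x t)⁻¹ * pgrad ρ x t α := fun α => by
    simp only [pgrad]
    rw [(hL.fun_sub hL').fderiv]
    simp
  have hd1 : pdiv (fun y s α => ρ y s * u y s α) x t
      = ∑ α, (ρ x t * fderiv ℝ (fun y => u y t α) x (Pi.single α 1)
          + u x t α * pgrad ρ x t α) := by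
    refine Finset.sum_congr rfl fun α _ => ?_
    rw [(dρ.hasFDerivAt.fun_mul (du α).hasFDerivAt).fderiv]
    simp [pgrad]
  have hd2 : pdiv (fun y s α => ρbar y s * ubar y s α) x t
      = ∑ α, (ρbar x t * fderiv ℝ (fun y => ubar y t α) x (Pi.single α 1)
          + ubar x t α * pgrad ρbar x t α) := by
    refine Finset.sum_congr rfl fun α _ => ?_
    rw [(dρbar.hasFDerivAt.fun_mul (dubar α).hasFDerivAt).fderiv]
    simp [pgrad]
  have hd3 : pdiv (fun y s α =>
        ρ y s * Real.log (ρbar y s) * u y s α + ρ y s * ubar y s α) x t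
      = ∑ α, (ρ x t * Real.log (ρbar x t) * fderiv ℝ (fun y => u y t α) x (Pi.single α 1)
          + u x t α * (ρ x t * ((ρbar x t)⁻¹ * pgrad ρbar x t α)
            + Real.log (ρbar x t) * pgrad ρ x t α)
          + (ρ x t * fderiv ℝ (fun y => ubar y t α) x (Pi.single α 1)
            + ubar x t α * pgrad ρ x t α)) := by
    refine Finset.sum_congr rfl fun α _ => ?_
    rw [(((dρ.hasFDerivAt.fun_mul hL).fun_mul (du α).hasFDerivAt).fun_add
      (dρ.hasFDerivAt.fun_mul (dubar α).hasFDerivAt)).fderiv]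
    simp [pgrad]
    ring
  -- all the spatial terms together are `ln ρ̄ · div(ρu) + (ρ/ρ̄) · div(ρ̄ū)`
  have key : pdiv (fun y s α =>
            ρ y s * Real.log (ρbar y s) * u y s α + ρ y s * ubar y s α) x t
        + (∑ α, pgrad (fun y s => Real.log (ρbar y s) - Real.log (ρ y s)) x t α *
            (ρ x t * ubar x t α))
        - (∑ α, pgrad (fun y s => Real.log (ρbar y s)) x t α * (ρ x t * u x t α))
      = Real.log (ρbar x t) * pdiv (fun y s α => ρ y s * u y s α) x t
        + ρ x t / ρbar x t * pdiv (fun y s α => ρbar y s * ubar y s α) x t := by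
    rw [hd1, hd2, hd3, Finset.mul_sum, Finset.mul_sum, ← Finset.sum_add_distrib,
      ← Finset.sum_add_distrib, ← Finset.sum_sub_distrib]
    refine Finset.sum_congr rfl fun α _ => ?_
    rw [hg, hgb]
    field_simp
    ring
  rw [hT]
  linear_combination key + Real.log (ρbar x t) * e1 + ρ x t / ρbar x t * e2
end

section
/- Let d ≥ 1, let ρ, ρ̄ : ℝ^d × ℝ → ℝ be continuously differentiable and strictly positive, and let u, ū : ℝ^d × ℝ → ℝ^d be continuously differentiable vector fields satisfying ∂_t ρ + div(ρu) = 0 and ∂_t ρ̄ + div(ρ̄ū) = 0. Then the pointwise identity ∂_t[(ln ρ − ln ρ̄)(ρ − ρ̄)] + div[(ln ρ − ln ρ̄)(ρu − ρ̄ū) + (ρ − ρ̄)(u − ū)] − (ρ + ρ̄) ∇(ln ρ − ln ρ̄) · (u − ū) = 0 holds. -/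
/-- the symmetrized relative entropy identity for two C¹ strictly positive
solutions `(ρ,u)`, `(ρ̄,ū)` of the transport equation `∂_t ρ + div(ρu) = 0`:
`∂_t[(ln ρ − ln ρ̄)(ρ − ρ̄)] + div[(ln ρ − ln ρ̄)(ρu − ρ̄ū) + (ρ − ρ̄)(u − ū)]
  − (ρ + ρ̄) ∇(ln ρ − ln ρ̄) · (u − ū) = 0`. -/
theorem transport_symmetrized_relative_entropy_identity {d : ℕ} (hd : 1 ≤ d)
    (ρ ρbar : (Fin d → ℝ) → ℝ → ℝ)
    (u ubar : (Fin d → ℝ) → ℝ → Fin d → ℝ)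
    (hρ : ContDiff ℝ 1 (fun p : (Fin d → ℝ) × ℝ => ρ p.1 p.2))
    (hρbar : ContDiff ℝ 1 (fun p : (Fin d → ℝ) × ℝ => ρbar p.1 p.2))
    (hu : ContDiff ℝ 1 (fun p : (Fin d → ℝ) × ℝ => u p.1 p.2))
    (hubar : ContDiff ℝ 1 (fun p : (Fin d → ℝ) × ℝ => ubar p.1 p.2))
    (hρpos : ∀ x t, 0 < ρ x t) (hρbarpos : ∀ x t, 0 < ρbar x t)
    (htrans : ∀ x t, ptime ρ x t + pdiv (fun y s α => ρ y s * u y s α) x t = 0)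
    (htransbar : ∀ x t, ptime ρbar x t + pdiv (fun y s α => ρbar y s * ubar y s α) x t = 0) :
    ∀ x t,
      ptime (fun y s => (Real.log (ρ y s) - Real.log (ρbar y s)) * (ρ y s - ρbar y s)) x t
        + pdiv (fun y s α =>
            (Real.log (ρ y s) - Real.log (ρbar y s)) *
                (ρ y s * u y s α - ρbar y s * ubar y s α)
              + (ρ y s - ρbar y s) * (u y s α - ubar y s α)) x t
        - (ρ x t + ρbar x t) *
            (∑ α, pgrad (fun y s => Real.log (ρ y s) - Real.log (ρbar y s)) x t α *
              (u x t α - ubar x t α)) = 0 := by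
  intro x t
  have hX : ContDiff ℝ 1 (fun y : Fin d → ℝ => (y, t)) := by fun_prop
  have hT : ContDiff ℝ 1 (fun s : ℝ => (x, s)) := by fun_prop
  have one_ne : (1 : WithTop ℕ∞) ≠ 0 := one_ne_zero
  have hρx : DifferentiableAt ℝ (fun y => ρ y t) x :=
    ((hρ.comp hX).differentiable one_ne) x
  have hρbx : DifferentiableAt ℝ (fun y => ρbar y t) x :=
    ((hρbar.comp hX).differentiable one_ne) x
  have hux : ∀ α, DifferentiableAt ℝ (fun y => u y t α) x :=
    differentiableAt_pi.1 (((hu.comp hX).differentiable one_ne) x)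
  have hubx : ∀ α, DifferentiableAt ℝ (fun y => ubar y t α) x :=
    differentiableAt_pi.1 (((hubar.comp hX).differentiable one_ne) x)
  have hρt : HasDerivAt (ρ x) (ptime ρ x t) t :=
    (((hρ.comp hT).differentiable one_ne) t).hasDerivAt
  have hρbt : HasDerivAt (ρbar x) (ptime ρbar x t) t :=
    (((hρbar.comp hT).differentiable one_ne) t).hasDerivAt
  have hp := (hρpos x t).ne'
  have hq := (hρbarpos x t).ne'
  have hL := (hρx.hasFDerivAt.log hp).sub (hρbx.hasFDerivAt.log hq)
  have e1 := htrans x t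
  have e2 := htransbar x t
  have e3 : ptime (fun y s => (Real.log (ρ y s) - Real.log (ρbar y s)) * (ρ y s - ρbar y s)) x t
      = _ := (((hρt.log hp).sub (hρbt.log hq)).mul (hρt.sub hρbt)).deriv
  have e4 : ∀ α, fderiv ℝ (fun y => ρ y t * u y t α) x = _ := fun α =>
    (hρx.hasFDerivAt.mul (hux α).hasFDerivAt).fderiv
  have e5 : ∀ α, fderiv ℝ (fun y => ρbar y t * ubar y t α) x = _ := fun α =>
    (hρbx.hasFDerivAt.mul (hubx α).hasFDerivAt).fderiv
  have e6 : fderiv ℝ (fun y => Real.log (ρ y t) - Real.log (ρbar y t)) x = _ := hL.fderiv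
  have e7 : ∀ α, fderiv ℝ (fun y => (Real.log (ρ y t) - Real.log (ρbar y t)) *
        (ρ y t * u y t α - ρbar y t * ubar y t α)
          + (ρ y t - ρbar y t) * (u y t α - ubar y t α)) x = _ := fun α =>
    ((hL.mul ((hρx.hasFDerivAt.mul (hux α).hasFDerivAt).sub
      (hρbx.hasFDerivAt.mul (hubx α).hasFDerivAt))).add
      ((hρx.hasFDerivAt.sub hρbx.hasFDerivAt).mul
        ((hux α).hasFDerivAt.sub (hubx α).hasFDerivAt))).fderiv
  rw [e3, eq_neg_of_add_eq_zero_left e1, eq_neg_of_add_eq_zero_left e2]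
  simp only [pdiv, pgrad, e4, e5, e6, e7]
  simp only [← Finset.sum_neg_distrib, Finset.sum_div, ← Finset.sum_sub_distrib, Finset.mul_sum,
    Finset.sum_mul, ← Finset.sum_add_distrib]
  refine Finset.sum_eq_zero fun α _ => ?_
  simp only [add_apply, sub_apply,
    smul_apply, smul_eq_mul, Pi.sub_apply, Pi.mul_apply]
  field_simp
  ring
end

section
/- Let d ≥ 1 and let ρ, ρ̄ : ℝ^d × (0,∞) → ℝ be twice continuously differentiable, strictly positive solutions of the heat equation ∂_t ρ = Δρ and ∂_t ρ̄ = Δρ̄. Then, with u := −∇ln ρ and ū := −∇ln ρ̄ (so that ρu = −∇ρ and ρ̄ū = −∇ρ̄), the pointwise identity ∂_t[(ln ρ − ln ρ̄)(ρ − ρ̄)] + div[(ln ρ − ln ρ̄)(ρu − ρ̄ū) + (ρ − ρ̄)(u − ū)] + (ρ + ρ̄) |∇(ln ρ − ln ρ̄)|² = 0 holds. In particular, for smooth positive periodic solutions the integral of (ln ρ − ln ρ̄)(ρ − ρ̄) is nonincreasing in time. -/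
/-- Spatial Laplacian of a scalar field `f(x,t)`. -/
noncomputable def plap {d : ℕ} (f : (Fin d → ℝ) → ℝ → ℝ) (x : Fin d → ℝ) (t : ℝ) : ℝ :=
  ∑ α, fderiv ℝ (fun y => fderiv ℝ (fun z => f z t) y (Pi.single α 1)) x (Pi.single α 1)

/-- The Otto velocity `u = −∇ln ρ` associated to a positive density `ρ`. -/
noncomputable def ottoVel {d : ℕ} (f : (Fin d → ℝ) → ℝ → ℝ) (y : Fin d → ℝ) (s : ℝ) :
    Fin d → ℝ :=
  fun α => -(pgrad (fun z s' => Real.log (f z s')) y s α)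

/-- A field `f(x,t)` is spatially periodic with period `L` in each coordinate. -/
def SpacePeriodic {d : ℕ} (f : (Fin d → ℝ) → ℝ → ℝ) (L : ℝ) : Prop :=
  ∀ (x : Fin d → ℝ) (t : ℝ) (k : Fin d → ℤ), f (x + fun β => (k β : ℝ) * L) t = f x t

section
variable {E : Type*} [NormedAddCommGroup E] [NormedSpace ℝ E]

lemma log_grad {f : E → ℝ} (hf : Differentiable ℝ f) (hp : ∀ y, 0 < f y) (e y : E) :
    fderiv ℝ (fun z => Real.log (f z)) y e = fderiv ℝ f y e / f y := by
  rw [((hf y).hasFDerivAt.log (hp y).ne').fderiv]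
  simp [div_eq_inv_mul]

lemma entropy_grad {f g : E → ℝ} (hf : Differentiable ℝ f) (hg : Differentiable ℝ g)
    (hfp : ∀ y, 0 < f y) (hgp : ∀ y, 0 < g y) (e y : E) :
    fderiv ℝ (fun z => (Real.log (f z) - Real.log (g z)) * (f z - g z)) y e =
      (Real.log (f y) - Real.log (g y)) * (fderiv ℝ f y e - fderiv ℝ g y e)
        + (f y - g y) * (fderiv ℝ f y e / f y - fderiv ℝ g y e / g y) := by
  have h := (((hf y).hasFDerivAt.log (hfp y).ne').sub ((hg y).hasFDerivAt.log (hgp y).ne')).mul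
    ((hf y).hasFDerivAt.sub (hg y).hasFDerivAt)
  have h' := congrArg (fun T => T e) h.fderiv
  refine Eq.trans h' ?_
  simp [div_eq_inv_mul]

/-- Second derivative of `(ln f - ln g)(f - g)` in a fixed direction `e`. The coefficients of the second
derivatives of `f` and `g` are those of the first derivatives in the chain rule, which is what
lets the heat equation turn them into a time derivative (`ptime_entropy`). -/
lemma entropy_hess {f g : E → ℝ} (hf : ContDiff ℝ 2 f) (hg : ContDiff ℝ 2 g)
    (hfp : ∀ y, 0 < f y) (hgp : ∀ y, 0 < g y) (e y : E) :
    fderiv ℝ (fun x => fderiv ℝ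
        (fun z => (Real.log (f z) - Real.log (g z)) * (f z - g z)) x e) y e =
      ((f y - g y) / f y + (Real.log (f y) - Real.log (g y))) *
          fderiv ℝ (fun x => fderiv ℝ f x e) y e
        - ((f y - g y) / g y + (Real.log (f y) - Real.log (g y))) *
          fderiv ℝ (fun x => fderiv ℝ g x e) y e
        + (f y + g y) * (fderiv ℝ f y e / f y - fderiv ℝ g y e / g y) ^ 2 := by
  have hf1 := hf.differentiable (by norm_num)
  have hg1 := hg.differentiable (by norm_num)
  simp_rw [entropy_grad hf1 hg1 hfp hgp e]
  have hf2 : Differentiable ℝ (fun x => fderiv ℝ f x e) :=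
    ((hf.fderiv_right (m := 1) (by norm_num)).clm_apply contDiff_const).differentiable (by norm_num)
  have hg2 : Differentiable ℝ (fun x => fderiv ℝ g x e) :=
    ((hg.fderiv_right (m := 1) (by norm_num)).clm_apply contDiff_const).differentiable (by norm_num)
  have hf0 := (hfp y).ne'
  have hg0 := (hgp y).ne'
  have F := (hf1 y).hasFDerivAt
  have G := (hg1 y).hasFDerivAt
  have F2 := (hf2 y).hasFDerivAt
  have G2 := (hg2 y).hasFDerivAt
  -- The quotients `Df / f` are differentiated in the definitionally equal form `Df * f⁻¹`.
  have h := (((F.log hf0).sub (G.log hg0)).mul (F2.sub G2)).add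
    ((F.sub G).mul ((F2.mul ((hasDerivAt_inv hf0).comp_hasFDerivAt y F)).sub (G2.mul ((hasDerivAt_inv hg0).comp_hasFDerivAt y G))))
  have h' := congrArg (fun T => T e) h.fderiv
  refine Eq.trans ?_ (h'.trans ?_)
  · rfl
  · simp
    field_simp
    ring
end

lemma slice_space {d : ℕ} {f : (Fin d → ℝ) → ℝ → ℝ}
    (hf : ContDiffOn ℝ 2 (fun p : (Fin d → ℝ) × ℝ => f p.1 p.2)
      {p : (Fin d → ℝ) × ℝ | 0 < p.2}) {t : ℝ} (ht : 0 < t) :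
    ContDiff ℝ 2 (fun y => f y t) := by
  rw [← contDiffOn_univ]
  exact hf.comp (contDiff_id.prodMk contDiff_const).contDiffOn (fun _ _ => ht)

lemma isOpen_half (d : ℕ) : IsOpen {p : (Fin d → ℝ) × ℝ | 0 < p.2} :=
  isOpen_lt continuous_const continuous_snd

/-- The time derivative, expressed through the joint Fréchet derivative so that its joint continuity
in `(x, t)` is available. -/
lemma slice_time {d : ℕ} {f : (Fin d → ℝ) → ℝ → ℝ}
    (hf : ContDiffOn ℝ 2 (fun p : (Fin d → ℝ) × ℝ => f p.1 p.2)
      {p : (Fin d → ℝ) × ℝ | 0 < p.2}) (x : Fin d → ℝ) {t : ℝ} (ht : 0 < t) :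
    HasDerivAt (f x) (fderiv ℝ (fun p : (Fin d → ℝ) × ℝ => f p.1 p.2) (x, t) (0, 1)) t := by
  have h := ((hf.contDiffAt ((isOpen_half d).mem_nhds (x := (x, t)) ht)).differentiableAt
    (by norm_num)).hasFDerivAt
  exact h.comp_hasDerivAt t ((hasDerivAt_const t x).prodMk (hasDerivAt_id t))

open MeasureTheory in
/-- The Laplacian of a periodic `C²` function has zero integral over a period cell: its flux through
opposite faces cancels. -/
lemma integral_plap_eq_zero {n : ℕ} {h : (Fin (n + 1) → ℝ) → ℝ} (hh : ContDiff ℝ 2 h)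
    {L : ℝ} (hL : 0 < L)
    (hper : ∀ (x : Fin (n + 1) → ℝ) (k : Fin (n + 1) → ℤ), h (x + fun β => (k β : ℝ) * L) = h x) :
    ∫ x in Set.Icc (0 : Fin (n + 1) → ℝ) (fun _ => L),
      ∑ α, fderiv ℝ (fun y => fderiv ℝ h y (Pi.single α 1)) x (Pi.single α 1) = 0 := by
  have h1 : ∀ α : Fin (n + 1), ContDiff ℝ 1 (fun y => fderiv ℝ h y (Pi.single α 1)) := fun α =>
    (hh.fderiv_right (m := 1) (by norm_num)).clm_apply contDiff_const
  have hcont : Continuous (fun x => ∑ α : Fin (n + 1),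
      fderiv ℝ (fun y => fderiv ℝ h y (Pi.single α 1)) x (Pi.single α 1)) :=
    continuous_finsetSum _ fun α _ =>
      ((h1 α).continuous_fderiv (by norm_num)).clm_apply continuous_const
  rw [integral_divergence_of_hasFDerivAt_off_countable' (0 : Fin (n + 1) → ℝ) (fun _ => L)
    (fun _ => hL.le) (fun α y => fderiv ℝ h y (Pi.single α 1))
    (fun α x => fderiv ℝ (fun y => fderiv ℝ h y (Pi.single α 1)) x) ∅ Set.countable_empty
    (fun α => (h1 α).continuous.continuousOn)
    (fun x _ α => ((h1 α).differentiable (by norm_num) x).hasFDerivAt)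
    (hcont.continuousOn.integrableOn_compact isCompact_Icc)]
  refine Finset.sum_eq_zero fun α _ => sub_eq_zero.2 ?_
  congr 1
  funext x
  -- The two opposite faces differ by the period vector `L • e_α`.
  have hface : (α.insertNth L x : Fin (n + 1) → ℝ) = α.insertNth ((0 : Fin (n + 1) → ℝ) α) x
      + fun β => (((Pi.single α 1 : Fin (n + 1) → ℤ) β : ℤ) : ℝ) * L := by
    funext β
    refine α.succAboveCases ?_ (fun j => ?_) β
    · simp
    · simp
  have hshift := fderiv_comp_add_right (𝕜 := ℝ) (f := h)
    (x := (α.insertNth ((0 : Fin (n + 1) → ℝ) α) x : Fin (n + 1) → ℝ))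
    (fun β => (((Pi.single α 1 : Fin (n + 1) → ℤ) β : ℤ) : ℝ) * L)
  rw [funext fun y => hper y (Pi.single α 1)] at hshift
  rw [hface, ← hshift]

open MeasureTheory in
/-- A periodic subsolution of the heat equation has nonincreasing integral over a period cell. -/
lemma antitoneOn_integral_of_ptime_le_plap {n : ℕ} {h : (Fin (n + 1) → ℝ) → ℝ → ℝ}
    (hh : ContDiffOn ℝ 2 (fun p : (Fin (n + 1) → ℝ) × ℝ => h p.1 p.2)
      {p : (Fin (n + 1) → ℝ) × ℝ | 0 < p.2}) {L : ℝ} (hL : 0 < L) (hper : SpacePeriodic h L)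
    (hle : ∀ x t, 0 < t → ptime h x t ≤ plap h x t) :
    AntitoneOn (fun t => ∫ x in Set.Icc (0 : Fin (n + 1) → ℝ) (fun _ => L), h x t)
      (Set.Ioi 0) := by
  set K := Set.Icc (0 : Fin (n + 1) → ℝ) (fun _ => L)
  have hK : IsCompact K := isCompact_Icc
  set G : (Fin (n + 1) → ℝ) × ℝ → ℝ :=
    fun p => fderiv ℝ (fun p : (Fin (n + 1) → ℝ) × ℝ => h p.1 p.2) p (0, 1)
  have hG : ContinuousOn G {p : (Fin (n + 1) → ℝ) × ℝ | 0 < p.2} :=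
    (hh.continuousOn_fderiv_of_isOpen (isOpen_half _) (by norm_num)).clm_apply continuousOn_const
  have hGx : ∀ t, 0 < t → Continuous fun x => G (x, t) := fun t ht =>
    hG.comp_continuous (by fun_prop) fun _ => ht
  have hder : ∀ t, 0 < t → HasDerivAt (fun t => ∫ x in K, h x t) (∫ x in K, G (x, t)) t := by
    intro t ht
    -- Domination: `∂ₜh` is bounded on the compact set `K × [t/2, 2t]`.
    obtain ⟨C, hC⟩ :=
      (hK.prod (isCompact_Icc (a := t / 2) (b := 2 * t))).exists_bound_of_continuousOn
      (hG.mono fun p hp => lt_of_lt_of_le (half_pos ht) hp.2.1)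
    refine (hasDerivAt_integral_of_dominated_loc_of_deriv_le (μ := volume.restrict K)
      (F := fun t x => h x t) (F' := fun t x => G (x, t)) (bound := fun _ => C)
      (Icc_mem_nhds (a := t / 2) (b := 2 * t) (by linarith) (by linarith)) ?_ ?_ ?_ ?_ ?_ ?_).2
    · filter_upwards [lt_mem_nhds ht] with s hs
      exact (slice_space hh hs).continuous.aestronglyMeasurable
    · exact (slice_space hh ht).continuous.continuousOn.integrableOn_compact hK
    · exact (hGx t ht).aestronglyMeasurable
    · filter_upwards [ae_restrict_mem measurableSet_Icc] with x hx s hs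
      exact hC (x, s) ⟨hx, hs⟩
    · exact continuousOn_const.integrableOn_compact hK
    · refine Filter.Eventually.of_forall fun x s hs => ?_
      exact slice_time hh x (lt_of_lt_of_le (half_pos ht) hs.1)
  refine antitoneOn_of_deriv_nonpos (convex_Ioi 0)
    (fun t ht => (hder t ht).continuousAt.continuousWithinAt) ?_ ?_
  · rw [interior_Ioi]
    exact fun t ht => (hder t ht).differentiableAt.differentiableWithinAt
  · rw [interior_Ioi]
    intro t ht
    rw [(hder t ht).deriv]
    have hs := slice_space hh ht
    rw [← integral_plap_eq_zero hs hL fun x k => hper x t k]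
    refine setIntegral_mono_on ((hGx t ht).continuousOn.integrableOn_compact hK) ?_
      measurableSet_Icc fun x _ => ?_
    · refine Continuous.integrableOn_Icc (continuous_finsetSum _ fun α _ => ?_)
      exact (((hs.fderiv_right (m := 1) (by norm_num)).clm_apply
        contDiff_const).continuous_fderiv (by norm_num)).clm_apply continuous_const
    · exact (slice_time hh x ht).deriv.symm.trans_le (hle x t ht)

/-- The time derivative of the symmetrized relative entropy density, grouped by `∂ₜf` and `∂ₜg`. -/
lemma ptime_entropy {d : ℕ} {f g : (Fin d → ℝ) → ℝ → ℝ}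
    (hf : ContDiffOn ℝ 2 (fun p : (Fin d → ℝ) × ℝ => f p.1 p.2)
      {p : (Fin d → ℝ) × ℝ | 0 < p.2})
    (hg : ContDiffOn ℝ 2 (fun p : (Fin d → ℝ) × ℝ => g p.1 p.2)
      {p : (Fin d → ℝ) × ℝ | 0 < p.2})
    (hfp : ∀ x t, 0 < t → 0 < f x t) (hgp : ∀ x t, 0 < t → 0 < g x t)
    (x : Fin d → ℝ) {t : ℝ} (ht : 0 < t) :
    ptime (fun y s => (Real.log (f y s) - Real.log (g y s)) * (f y s - g y s)) x t =
      ((f x t - g x t) / f x t + (Real.log (f x t) - Real.log (g x t))) * ptime f x t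
        - ((f x t - g x t) / g x t + (Real.log (f x t) - Real.log (g x t))) * ptime g x t := by
  have F := (slice_time hf x ht).differentiableAt.hasDerivAt
  have G := (slice_time hg x ht).differentiableAt.hasDerivAt
  have h := ((F.log (hfp x t ht).ne').sub (G.log (hgp x t ht).ne')).mul (F.sub G)
  refine h.deriv.trans ?_
  simp only [ptime, Pi.sub_apply]
  ring

/-- The identity in the form `ΔE = ∂ₜE + (f + g)|∇(ln f - ln g)|²`, where
`E = (ln f - ln g)(f - g)`. -/
lemma entropy_evolution {d : ℕ} {f g : (Fin d → ℝ) → ℝ → ℝ}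
    (hf : ContDiffOn ℝ 2 (fun p : (Fin d → ℝ) × ℝ => f p.1 p.2)
      {p : (Fin d → ℝ) × ℝ | 0 < p.2})
    (hg : ContDiffOn ℝ 2 (fun p : (Fin d → ℝ) × ℝ => g p.1 p.2)
      {p : (Fin d → ℝ) × ℝ | 0 < p.2})
    (hfp : ∀ x t, 0 < t → 0 < f x t) (hgp : ∀ x t, 0 < t → 0 < g x t)
    (hfh : ∀ x t, 0 < t → ptime f x t = plap f x t)
    (hgh : ∀ x t, 0 < t → ptime g x t = plap g x t)
    (x : Fin d → ℝ) {t : ℝ} (ht : 0 < t) :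
    plap (fun y s => (Real.log (f y s) - Real.log (g y s)) * (f y s - g y s)) x t =
      ptime (fun y s => (Real.log (f y s) - Real.log (g y s)) * (f y s - g y s)) x t
        + (f x t + g x t) *
          ∑ α, (pgrad (fun y s => Real.log (f y s) - Real.log (g y s)) x t α) ^ 2 := by
  have hfs := slice_space hf ht
  have hgs := slice_space hg ht
  have hf1 := hfs.differentiable (by norm_num)
  have hg1 := hgs.differentiable (by norm_num)
  have hgrad : ∀ α, pgrad (fun y s => Real.log (f y s) - Real.log (g y s)) x t α =
      fderiv ℝ (fun y => f y t) x (Pi.single α 1) / f x t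
        - fderiv ℝ (fun y => g y t) x (Pi.single α 1) / g x t := by
    intro α
    rw [← log_grad hf1 (fun y => hfp y t ht), ← log_grad hg1 (fun y => hgp y t ht), pgrad,
      fderiv_fun_sub ((hf1 x).log (hfp x t ht).ne') ((hg1 x).log (hgp x t ht).ne')]
    rfl
  rw [ptime_entropy hf hg hfp hgp x ht, hfh x t ht, hgh x t ht]
  simp only [hgrad, plap, Finset.mul_sum, ← Finset.sum_sub_distrib, ← Finset.sum_add_distrib]
  exact Finset.sum_congr rfl fun α _ =>
    entropy_hess hfs hgs (fun y => hfp y t ht) (fun y => hgp y t ht) (Pi.single α 1) x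

/-- The flux equals `-∇E` with `E = (ln f - ln g)(f - g)`, hence its divergence is `-ΔE`. -/
lemma pdiv_flux {d : ℕ} {f g : (Fin d → ℝ) → ℝ → ℝ}
    (hf : ContDiffOn ℝ 2 (fun p : (Fin d → ℝ) × ℝ => f p.1 p.2)
      {p : (Fin d → ℝ) × ℝ | 0 < p.2})
    (hg : ContDiffOn ℝ 2 (fun p : (Fin d → ℝ) × ℝ => g p.1 p.2)
      {p : (Fin d → ℝ) × ℝ | 0 < p.2})
    (hfp : ∀ x t, 0 < t → 0 < f x t) (hgp : ∀ x t, 0 < t → 0 < g x t)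
    (x : Fin d → ℝ) {t : ℝ} (ht : 0 < t) :
    pdiv (fun y s α =>
        (Real.log (f y s) - Real.log (g y s)) *
            (f y s * ottoVel f y s α - g y s * ottoVel g y s α)
          + (f y s - g y s) * (ottoVel f y s α - ottoVel g y s α)) x t =
      -plap (fun y s => (Real.log (f y s) - Real.log (g y s)) * (f y s - g y s)) x t := by
  have hf1 := (slice_space hf ht).differentiable (by norm_num)
  have hg1 := (slice_space hg ht).differentiable (by norm_num)
  rw [pdiv, plap, ← Finset.sum_neg_distrib]
  refine Finset.sum_congr rfl fun α _ => ?_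
  rw [← neg_apply, ← fderiv_fun_neg]
  congr 2
  funext y
  rw [entropy_grad hf1 hg1 (fun y => hfp y t ht) (fun y => hgp y t ht)]
  simp only [ottoVel, pgrad]
  rw [log_grad hf1 (fun y => hfp y t ht), log_grad hg1 (fun y => hgp y t ht)]
  have := (hfp y t ht).ne'
  have := (hgp y t ht).ne'
  field_simp
  ring

/-- for two C² strictly positive solutions `ρ`, `ρ̄` of the heat equation
on `ℝ^d × (0,∞)`, with `u = −∇ln ρ` and `ū = −∇ln ρ̄`, the pointwise identity
`∂_t[(ln ρ − ln ρ̄)(ρ − ρ̄)] + div[(ln ρ − ln ρ̄)(ρu − ρ̄ū) + (ρ − ρ̄)(u − ū)]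
  + (ρ + ρ̄)|∇(ln ρ − ln ρ̄)|² = 0` holds for `t > 0`; in particular, for (smooth
positive) periodic solutions the integral of `(ln ρ − ln ρ̄)(ρ − ρ̄)` over a period
cell is nonincreasing in time. -/
theorem heat_symmetrized_relative_entropy_identity {d : ℕ} (hd : 1 ≤ d)
    (ρ ρbar : (Fin d → ℝ) → ℝ → ℝ)
    (hρ : ContDiffOn ℝ 2 (fun p : (Fin d → ℝ) × ℝ => ρ p.1 p.2)
      {p : (Fin d → ℝ) × ℝ | 0 < p.2})
    (hρbar : ContDiffOn ℝ 2 (fun p : (Fin d → ℝ) × ℝ => ρbar p.1 p.2)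
      {p : (Fin d → ℝ) × ℝ | 0 < p.2})
    (hρpos : ∀ x t, 0 < t → 0 < ρ x t) (hρbarpos : ∀ x t, 0 < t → 0 < ρbar x t)
    (hheat : ∀ x t, 0 < t → ptime ρ x t = plap ρ x t)
    (hheatbar : ∀ x t, 0 < t → ptime ρbar x t = plap ρbar x t) :
    (∀ x t, 0 < t →
      ptime (fun y s => (Real.log (ρ y s) - Real.log (ρbar y s)) * (ρ y s - ρbar y s)) x t
        + pdiv (fun y s α =>
            (Real.log (ρ y s) - Real.log (ρbar y s)) *
                (ρ y s * ottoVel ρ y s α - ρbar y s * ottoVel ρbar y s α)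
              + (ρ y s - ρbar y s) * (ottoVel ρ y s α - ottoVel ρbar y s α)) x t
        + (ρ x t + ρbar x t) *
            (∑ α, (pgrad (fun y s => Real.log (ρ y s) - Real.log (ρbar y s)) x t α) ^ 2)
        = 0) ∧
      (∀ L : ℝ, 0 < L → SpacePeriodic ρ L → SpacePeriodic ρbar L →
        AntitoneOn (fun t => ∫ x in Set.Icc (0 : Fin d → ℝ) (fun _ => L),
            (Real.log (ρ x t) - Real.log (ρbar x t)) * (ρ x t - ρbar x t))
          (Set.Ioi 0)) := by
  refine ⟨fun x t ht => ?_, fun L hL hper hperbar => ?_⟩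
  · rw [pdiv_flux hρ hρbar hρpos hρbarpos x ht,
      entropy_evolution hρ hρbar hρpos hρbarpos hheat hheatbar x ht]
    ring
  · obtain ⟨n, rfl⟩ : ∃ n, d = n + 1 := ⟨d - 1, by omega⟩
    refine antitoneOn_integral_of_ptime_le_plap
      (h := fun x t => (Real.log (ρ x t) - Real.log (ρbar x t)) * (ρ x t - ρbar x t)) ?_ hL ?_ ?_
    · exact ((hρ.log fun p hp => (hρpos p.1 p.2 hp).ne').sub
        (hρbar.log fun p hp => (hρbarpos p.1 p.2 hp).ne')).mul (hρ.sub hρbar)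
    · intro x t k
      simp only [hper x t k, hperbar x t k]
    · intro x t ht
      rw [entropy_evolution hρ hρbar hρpos hρbarpos hheat hheatbar x ht]
      have := hρpos x t ht
      have := hρbarpos x t ht
      exact le_add_of_nonneg_right
        (mul_nonneg (by linarith) (Finset.sum_nonneg fun _ _ => sq_nonneg _))
end

section
/- Let n ≥ 2, let D : Fin n → Fin n → ℝ satisfy D_{ij} = D_{ji} > 0 for i ≠ j, let c, c̄ : Fin n → ℝ and u, ū : Fin n → ℝ³. Then the following algebraic identity holds: Σ_i Σ_{j≠i} (1/D_{ij}) (c_i + c̄_i)(u_i − ū_i) · [c_j(u_i − u_j) − c̄_j(ū_i − ū_j)] = Σ_i Σ_{j≠i} (1/(2D_{ij})) (c_i c_j + c̄_i c̄_j) |(u_i − ū_i) − (u_j − ū_j)|² + Σ_i Σ_{j≠i} (1/D_{ij}) (c_j − c̄_j) (u_i − ū_i) · [c_i(ū_i − ū_j) + c̄_i(u_i − u_j)]. -/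
/-!
With `w i = u i - ubar i`, the left summand minus the error summand is, for each pair `(i, j)`,
`F i j = (1 / D i j) * (c i * c j + cbar i * cbar j) * ⟪w i, w i - w j⟫`. The coefficient is
symmetric in `i, j`, so averaging the double sum with its transpose replaces
`⟪w i, w i - w j⟫` by `‖w i - w j‖ ^ 2 / 2`, which is the quadratic part.
-/

open scoped RealInnerProductSpace

/-- A double sum over off-diagonal pairs is invariant under transposition. -/
lemma sum_offDiag_swap {n : ℕ} (F : Fin n → Fin n → ℝ) :
    ∑ i, ∑ j ∈ Finset.univ \ {i}, F j i = ∑ i, ∑ j ∈ Finset.univ \ {i}, F i j := by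
  apply Finset.sum_comm'
  intro i j
  simp [eq_comm]

/-- the algebraic identity expressing the friction term of the Maxwell–Stefan
relative entropy computation as a positive quadratic part plus an error term. -/
theorem maxwell_stefan_friction_identity {n : ℕ} (hn : 2 ≤ n)
    (D : Fin n → Fin n → ℝ)
    (hDsymm : ∀ i j, i ≠ j → D i j = D j i)
    (hDpos : ∀ i j, i ≠ j → 0 < D i j)
    (c cbar : Fin n → ℝ) (u ubar : Fin n → EuclideanSpace ℝ (Fin 3)) :
    ∑ i, ∑ j ∈ Finset.univ \ {i},
        (1 / D i j) * ((c i + cbar i) *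
          ⟪u i - ubar i, c j • (u i - u j) - cbar j • (ubar i - ubar j)⟫)
      = (∑ i, ∑ j ∈ Finset.univ \ {i},
          (1 / (2 * D i j)) * (c i * c j + cbar i * cbar j) *
            ‖(u i - ubar i) - (u j - ubar j)‖ ^ 2)
        + ∑ i, ∑ j ∈ Finset.univ \ {i},
            (1 / D i j) * (c j - cbar j) *
              ⟪u i - ubar i, c i • (ubar i - ubar j) + cbar i • (u i - u j)⟫ := by
  let F : Fin n → Fin n → ℝ := fun i j =>
    (1 / D i j) * (c i * c j + cbar i * cbar j) *
      ⟪u i - ubar i, (u i - ubar i) - (u j - ubar j)⟫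
  have hL : ∀ i j, (1 / D i j) * ((c i + cbar i) *
        ⟪u i - ubar i, c j • (u i - u j) - cbar j • (ubar i - ubar j)⟫)
      = F i j + (1 / D i j) * (c j - cbar j) *
        ⟪u i - ubar i, c i • (ubar i - ubar j) + cbar i • (u i - u j)⟫ := by
    intro i j
    simp only [F, inner_sub_right, inner_add_right, inner_smul_right]
    ring
  have hQ : ∀ i, ∀ j ∈ Finset.univ \ {i},
      (1 / (2 * D i j)) * (c i * c j + cbar i * cbar j) *
        ‖(u i - ubar i) - (u j - ubar j)‖ ^ 2 = F i j / 2 + F j i / 2 := by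
    intro i j hj
    have hij : i ≠ j := by
      rintro rfl
      simp at hj
    simp only [F]
    rw [hDsymm j i hij.symm, ← real_inner_self_eq_norm_sq]
    generalize u i - ubar i = x
    generalize u j - ubar j = y
    simp only [inner_sub_right, inner_sub_left, real_inner_comm x y]
    have := (hDpos i j hij).ne'
    field_simp
    ring
  rw [Finset.sum_congr rfl fun i _ => Finset.sum_congr rfl (hQ i)]
  simp only [hL, Finset.sum_add_distrib]
  rw [sum_offDiag_swap (fun i j => F i j / 2)]
  simp only [← Finset.sum_div]
  ring
end

section
/- Let n ≥ 2 and let D : Fin n → Fin n → ℝ satisfy D_{ij} = D_{ji} > 0 for i ≠ j. Let c_i, c̄_i : ℝ³ × ℝ → ℝ (i = 1,…,n) be continuously differentiable and strictly positive, and let u_i, ū_i : ℝ³ × ℝ → ℝ³ be continuously differentiable vector fields such that for each i: ∂_t c_i + div(c_i u_i) = 0, ∂_t c̄_i + div(c̄_i ū_i) = 0, ∇c_i = −Σ_{j≠i} (c_j c_i u_i − c_i c_j u_j)/D_{ij}, and ∇c̄_i = −Σ_{j≠i} (c̄_j c̄_i ū_i − c̄_i c̄_j ū_j)/D_{ij}.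 Then the pointwise identity ∂_t[Σ_i (ln c_i − ln c̄_i)(c_i − c̄_i)] + div[Σ_i (ln c_i − ln c̄_i)(c_i u_i − c̄_i ū_i) + (c_i − c̄_i)(u_i − ū_i)] + Σ_i Σ_{j≠i} (1/(2D_{ij}))(c_i c_j + c̄_i c̄_j)|(u_i − ū_i) − (u_j − ū_j)|² = −Σ_i Σ_{j≠i} (1/D_{ij}) (c_j − c̄_j)(u_i − ū_i) · [c_i(ū_i − ū_j) + c̄_i(u_i − u_j)] holds. -/
/-- A double sum over pairs `i ≠ j` of antisymmetric terms vanishes. -/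
theorem sum_offdiag_antisymm {n : ℕ} (F : Fin n → Fin n → ℝ)
    (hF : ∀ i j, i ≠ j → F i j = -F j i) :
    ∑ i, ∑ j ∈ Finset.univ \ {i}, F i j = 0 := by
  have hswap : ∑ i, ∑ j ∈ Finset.univ \ {i}, F i j
      = ∑ j, ∑ i ∈ Finset.univ \ {j}, F i j :=
    Finset.sum_comm' (by intro i j; simp [eq_comm])
  have hneg : ∑ j, ∑ i ∈ Finset.univ \ {j}, F i j
      = -∑ j, ∑ i ∈ Finset.univ \ {j}, F j i := by
    simp only [← Finset.sum_neg_distrib]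
    refine Finset.sum_congr rfl fun j _ => Finset.sum_congr rfl fun i hi => hF i j ?_
    simpa using hi
  linarith

theorem hasDerivAt_entropy {a b : ℝ → ℝ} {t : ℝ} (ha : DifferentiableAt ℝ a t)
    (hb : DifferentiableAt ℝ b t) (ha0 : 0 < a t) (hb0 : 0 < b t) :
    HasDerivAt (fun s => (Real.log (a s) - Real.log (b s)) * (a s - b s))
      ((deriv a t / a t - deriv b t / b t) * (a t - b t)
        + (Real.log (a t) - Real.log (b t)) * (deriv a t - deriv b t)) t :=
  ((ha.hasDerivAt.log ha0.ne').sub (hb.hasDerivAt.log hb0.ne')).mul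
    (ha.hasDerivAt.sub hb.hasDerivAt)

/-- Directional derivative of one component of the entropy flux of one species. -/
theorem fderiv_flux {a b p q : (Fin 3 → ℝ) → ℝ} {x : Fin 3 → ℝ} (e : Fin 3 → ℝ)
    (ha : DifferentiableAt ℝ a x) (hb : DifferentiableAt ℝ b x)
    (hp : DifferentiableAt ℝ p x) (hq : DifferentiableAt ℝ q x)
    (ha0 : 0 < a x) (hb0 : 0 < b x) :
    DifferentiableAt ℝ (fun y => (Real.log (a y) - Real.log (b y)) * (a y * p y - b y * q y)
        + (a y - b y) * (p y - q y)) x ∧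
    fderiv ℝ (fun y => (Real.log (a y) - Real.log (b y)) * (a y * p y - b y * q y)
        + (a y - b y) * (p y - q y)) x e
      = (fderiv ℝ a x e / a x - fderiv ℝ b x e / b x) * (a x * p x - b x * q x)
        + (Real.log (a x) - Real.log (b x)) *
          ((fderiv ℝ a x e * p x + a x * fderiv ℝ p x e)
            - (fderiv ℝ b x e * q x + b x * fderiv ℝ q x e))
        + (fderiv ℝ a x e - fderiv ℝ b x e) * (p x - q x)
        + (a x - b x) * (fderiv ℝ p x e - fderiv ℝ q x e) := by
  have h := (((ha.hasFDerivAt.log ha0.ne').sub (hb.hasFDerivAt.log hb0.ne')).mul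
    ((ha.hasFDerivAt.mul hp.hasFDerivAt).sub (hb.hasFDerivAt.mul hq.hasFDerivAt))).add
    ((ha.hasFDerivAt.sub hb.hasFDerivAt).mul (hp.hasFDerivAt.sub hq.hasFDerivAt))
  refine ⟨h.differentiableAt, ?_⟩
  refine (congrArg (fun A : (Fin 3 → ℝ) →L[ℝ] ℝ => A e) h.fderiv).trans ?_
  simp
  ring

/-- The entropy balance of a single species, as algebra: `a, b` are the two concentrations, `a', b'`
their time derivatives, `g, k` their gradients, `p, q` the velocities with `dp α, dq α` the derivative
of the `α`-th component in direction `α`, and `L` stands for `ln a - ln b`. The hypotheses `h₁, h₂`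
are the two mass conservation laws. -/
theorem species_balance (a b a' b' L : ℝ) (g k p q dp dq : Fin 3 → ℝ)
    (ha : 0 < a) (hb : 0 < b)
    (h₁ : a' + ∑ α, (g α * p α + a * dp α) = 0)
    (h₂ : b' + ∑ α, (k α * q α + b * dq α) = 0) :
    ((a' / a - b' / b) * (a - b) + L * (a' - b'))
      + ∑ α, ((g α / a - k α / b) * (a * p α - b * q α)
        + L * ((g α * p α + a * dp α) - (k α * q α + b * dq α))
        + (g α - k α) * (p α - q α) + (a - b) * (dp α - dq α))
      = ∑ α, (a + b) * (p α - q α) * (g α / a - k α / b) := by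
  have ha' := ha.ne'
  have hb' := hb.ne'
  simp only [Fin.sum_univ_three] at *
  have e₁ : a' = -(g 0 * p 0 + a * dp 0 + (g 1 * p 1 + a * dp 1) + (g 2 * p 2 + a * dp 2)) := by
    linarith
  have e₂ : b' = -(k 0 * q 0 + b * dq 0 + (k 1 * q 1 + b * dq 1) + (k 2 * q 2 + b * dq 2)) := by
    linarith
  subst e₁ e₂
  field_simp
  ring

/-- the symmetrized relative entropy identity for two C¹ strictly positive
solutions of the Maxwell–Stefan system (mass conservation plus force–flux relations). -/
theorem maxwell_stefan_symmetrized_relative_entropy_identity {n : ℕ} (hn : 2 ≤ n)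
    (D : Fin n → Fin n → ℝ)
    (hDsymm : ∀ i j, i ≠ j → D i j = D j i)
    (hDpos : ∀ i j, i ≠ j → 0 < D i j)
    (c cbar : Fin n → (Fin 3 → ℝ) → ℝ → ℝ)
    (u ubar : Fin n → (Fin 3 → ℝ) → ℝ → Fin 3 → ℝ)
    (hc : ∀ i, ContDiff ℝ 1 (fun p : (Fin 3 → ℝ) × ℝ => c i p.1 p.2))
    (hcbar : ∀ i, ContDiff ℝ 1 (fun p : (Fin 3 → ℝ) × ℝ => cbar i p.1 p.2))
    (hu : ∀ i, ContDiff ℝ 1 (fun p : (Fin 3 → ℝ) × ℝ => u i p.1 p.2))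
    (hubar : ∀ i, ContDiff ℝ 1 (fun p : (Fin 3 → ℝ) × ℝ => ubar i p.1 p.2))
    (hcpos : ∀ i x t, 0 < c i x t) (hcbarpos : ∀ i x t, 0 < cbar i x t)
    (htrans : ∀ i x t,
      ptime (c i) x t + pdiv (fun y s α => c i y s * u i y s α) x t = 0)
    (htransbar : ∀ i x t,
      ptime (cbar i) x t + pdiv (fun y s α => cbar i y s * ubar i y s α) x t = 0)
    (hflux : ∀ i x t α, pgrad (c i) x t α
      = -∑ j ∈ Finset.univ \ {i},
          (c j x t * c i x t * u i x t α - c i x t * c j x t * u j x t α) / D i j)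
    (hfluxbar : ∀ i x t α, pgrad (cbar i) x t α
      = -∑ j ∈ Finset.univ \ {i},
          (cbar j x t * cbar i x t * ubar i x t α
            - cbar i x t * cbar j x t * ubar j x t α) / D i j) :
    ∀ x t,
      ptime (fun y s => ∑ i,
          (Real.log (c i y s) - Real.log (cbar i y s)) * (c i y s - cbar i y s)) x t
        + pdiv (fun y s α => ∑ i,
            ((Real.log (c i y s) - Real.log (cbar i y s)) *
                (c i y s * u i y s α - cbar i y s * ubar i y s α)
              + (c i y s - cbar i y s) * (u i y s α - ubar i y s α))) x t
        + (∑ i, ∑ j ∈ Finset.univ \ {i},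
            (1 / (2 * D i j)) * (c i x t * c j x t + cbar i x t * cbar j x t) *
              (∑ α, ((u i x t α - ubar i x t α) - (u j x t α - ubar j x t α)) ^ 2))
        = -∑ i, ∑ j ∈ Finset.univ \ {i},
            (1 / D i j) * (c j x t - cbar j x t) *
              (∑ α, (u i x t α - ubar i x t α) *
                (c i x t * (ubar i x t α - ubar j x t α)
                  + cbar i x t * (u i x t α - u j x t α))) := by
  intro x t
  have cT : ∀ i, DifferentiableAt ℝ (c i x) t := fun i =>
    (((hc i).differentiable one_ne_zero).comp
      ((differentiable_const x).prodMk differentiable_id)) t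
  have cbT : ∀ i, DifferentiableAt ℝ (cbar i x) t := fun i =>
    (((hcbar i).differentiable one_ne_zero).comp
      ((differentiable_const x).prodMk differentiable_id)) t
  have cX : ∀ i, DifferentiableAt ℝ (fun y => c i y t) x := fun i =>
    (((hc i).differentiable one_ne_zero).comp
      (differentiable_id.prodMk (differentiable_const t))) x
  have cbX : ∀ i, DifferentiableAt ℝ (fun y => cbar i y t) x := fun i =>
    (((hcbar i).differentiable one_ne_zero).comp
      (differentiable_id.prodMk (differentiable_const t))) x
  have uX : ∀ i α, DifferentiableAt ℝ (fun y => u i y t α) x := fun i α =>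
    differentiableAt_pi.1 ((((hu i).differentiable one_ne_zero).comp
      (differentiable_id.prodMk (differentiable_const t))) x) α
  have ubX : ∀ i α, DifferentiableAt ℝ (fun y => ubar i y t α) x := fun i α =>
    differentiableAt_pi.1 ((((hubar i).differentiable one_ne_zero).comp
      (differentiable_id.prodMk (differentiable_const t))) x) α
  have hmass : ∀ i, deriv (c i x) t + ∑ α, (pgrad (c i) x t α * u i x t α
      + c i x t * fderiv ℝ (fun y => u i y t α) x (Pi.single α 1)) = 0 := by
    intro i
    rw [← htrans i x t]
    unfold ptime pdiv pgrad
    congr 1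
    refine Finset.sum_congr rfl fun α _ => ?_
    rw [fderiv_fun_mul (cX i) (uX i α)]
    simp
    ring
  have hmassbar : ∀ i, deriv (cbar i x) t + ∑ α, (pgrad (cbar i) x t α * ubar i x t α
      + cbar i x t * fderiv ℝ (fun y => ubar i y t α) x (Pi.single α 1)) = 0 := by
    intro i
    rw [← htransbar i x t]
    unfold ptime pdiv pgrad
    congr 1
    refine Finset.sum_congr rfl fun α _ => ?_
    rw [fderiv_fun_mul (cbX i) (ubX i α)]
    simp
    ring
  have hforce : ∀ i α, pgrad (c i) x t α / c i x t - pgrad (cbar i) x t α / cbar i x t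
      = -∑ j ∈ Finset.univ \ {i}, (1 / D i j) * (c j x t * (u i x t α - u j x t α)
          - cbar j x t * (ubar i x t α - ubar j x t α)) := by
    intro i α
    have h1 := (hcpos i x t).ne'
    have h2 := (hcbarpos i x t).ne'
    rw [hflux, hfluxbar, neg_div, neg_div, Finset.sum_div, Finset.sum_div, sub_neg_eq_add,
      neg_add_eq_sub, ← Finset.sum_sub_distrib, ← Finset.sum_neg_distrib]
    refine Finset.sum_congr rfl fun j hj => ?_
    have h3 : D i j ≠ 0 := (hDpos i j (by simpa [eq_comm] using hj)).ne'
    field_simp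
    ring
  have hbalance : ptime (fun y s => ∑ i,
          (Real.log (c i y s) - Real.log (cbar i y s)) * (c i y s - cbar i y s)) x t
        + pdiv (fun y s α => ∑ i,
            ((Real.log (c i y s) - Real.log (cbar i y s)) *
                (c i y s * u i y s α - cbar i y s * ubar i y s α)
              + (c i y s - cbar i y s) * (u i y s α - ubar i y s α))) x t
      = ∑ i, ∑ α, (c i x t + cbar i x t) * (u i x t α - ubar i x t α)
          * (pgrad (c i) x t α / c i x t - pgrad (cbar i) x t α / cbar i x t) := by
    have hflx := fun i α => fderiv_flux (Pi.single α 1) (cX i) (cbX i) (uX i α) (ubX i α)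
      (hcpos i x t) (hcbarpos i x t)
    have htime := (HasDerivAt.fun_sum (u := Finset.univ) fun i _ =>
      hasDerivAt_entropy (cT i) (cbT i) (hcpos i x t) (hcbarpos i x t)).deriv
    have hspace := fun α : Fin 3 =>
      (congrArg (fun A : (Fin 3 → ℝ) →L[ℝ] ℝ => A (Pi.single α 1))
        (fderiv_fun_sum (u := Finset.univ) fun i _ => (hflx i α).1)).trans
      ((sum_apply _ _ _).trans
        (Finset.sum_congr rfl fun i _ => (hflx i α).2))
    unfold ptime pdiv
    rw [htime, Finset.sum_congr rfl fun α _ => hspace α, Finset.sum_comm,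
      ← Finset.sum_add_distrib]
    exact Finset.sum_congr rfl fun i _ => species_balance _ _ _ _ _ _ _ _ _ _ _
      (hcpos i x t) (hcbarpos i x t) (hmass i) (hmassbar i)
  have hsymm := sum_offdiag_antisymm (fun i j =>
      (1 / (2 * D i j)) * (c i x t * c j x t + cbar i x t * cbar j x t) *
          (∑ α, ((u i x t α - ubar i x t α) - (u j x t α - ubar j x t α)) ^ 2)
        - (1 / D i j) * (c i x t * c j x t + cbar i x t * cbar j x t) *
          (∑ α, (u i x t α - ubar i x t α) *
            ((u i x t α - ubar i x t α) - (u j x t α - ubar j x t α)))) (by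
    intro i j hij
    have h3 : D j i ≠ 0 := (hDpos j i hij.symm).ne'
    simp only [hDsymm i j hij, Fin.sum_univ_three]
    field_simp
    ring)
  simp only [Finset.sum_sub_distrib] at hsymm
  rw [hbalance, sub_eq_zero.1 hsymm, ← Finset.sum_add_distrib, ← Finset.sum_neg_distrib]
  refine Finset.sum_congr rfl fun i _ => ?_
  simp only [hforce, mul_neg, Finset.mul_sum, Finset.sum_neg_distrib]
  rw [Finset.sum_comm, neg_add_eq_sub, ← Finset.sum_sub_distrib, ← Finset.sum_neg_distrib]
  refine Finset.sum_congr rfl fun j _ => ?_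
  rw [← Finset.sum_sub_distrib, ← Finset.sum_neg_distrib]
  refine Finset.sum_congr rfl fun α _ => ?_
  ring
end

section
/- Let δ > 0 and let c, c̄ : ℝ³ → ℝ be continuously differentiable nonnegative functions, and let J, J̄ : ℝ³ → ℝ³ be any vector fields. With β(s) = ln(s + δ), the following pointwise identity holds: ∇[(c − c̄)β′(c)] · J − ∇[(c − c̄)β′(c̄)] · J̄ + ∇(β(c) − β(c̄)) · (J − J̄) = (c + c̄ + 2δ) ∇(ln(c + δ) − ln(c̄ + δ)) · ( J/(c + δ) − J̄/(c̄ + δ) ). -/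
/-!
Write `a = c + δ` and `b = c̄ + δ`, both positive. Since `(c - c̄)/a = 1 - b/a` and
`(c - c̄)/b = a/b - 1`, the quotient rule gives the gradients `b ∇a / a² - ∇b / a` and
`∇a / b - a ∇b / b²`, while the logarithmic term has gradient `∇a / a - ∇b / b`.
Substituting these, the two sides agree componentwise as rational expressions in
`a, b, ∇a, ∇b, J, J̄`.
-/

/-- `α`-th component of the gradient of a scalar field on `ℝ^d`. -/
noncomputable def sgrad {d : ℕ} (f : (Fin d → ℝ) → ℝ) (x : Fin d → ℝ) (α : Fin d) : ℝ :=
  fderiv ℝ f x (Pi.single α 1)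

theorem sgrad_sub_mul_one_div {d : ℕ} {f g k : (Fin d → ℝ) → ℝ} {x : Fin d → ℝ} {δ : ℝ}
    (hf : DifferentiableAt ℝ f x) (hg : DifferentiableAt ℝ g x) (hk : DifferentiableAt ℝ k x)
    (hx : k x + δ ≠ 0) (α : Fin d) :
    sgrad (fun y => (f y - g y) * (1 / (k y + δ))) x α
      = (sgrad f x α - sgrad g x α) / (k x + δ)
        - (f x - g x) * sgrad k x α / (k x + δ) ^ 2 := by
  have hinv : HasFDerivAt (fun y => 1 / (k y + δ))
      ((-((k x + δ) ^ 2)⁻¹) • fderiv ℝ k x) x := by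
    simpa only [one_div, Function.comp_def] using
      (hasDerivAt_inv hx).comp_hasFDerivAt x (hk.hasFDerivAt.add_const δ)
  have h := (hf.hasFDerivAt.sub hg.hasFDerivAt).mul hinv
  have hD : fderiv ℝ (fun y => (f y - g y) * (1 / (k y + δ))) x = _ := h.fderiv
  simp only [sgrad, hD]
  simp
  ring

theorem sgrad_log_sub_log {d : ℕ} {f g : (Fin d → ℝ) → ℝ} {x : Fin d → ℝ} {δ : ℝ}
    (hf : DifferentiableAt ℝ f x) (hg : DifferentiableAt ℝ g x)
    (hfx : f x + δ ≠ 0) (hgx : g x + δ ≠ 0) (α : Fin d) :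
    sgrad (fun y => Real.log (f y + δ) - Real.log (g y + δ)) x α
      = sgrad f x α / (f x + δ) - sgrad g x α / (g x + δ) := by
  have h := ((hf.hasFDerivAt.add_const δ).log hfx).sub ((hg.hasFDerivAt.add_const δ).log hgx)
  have hD : fderiv ℝ (fun y => Real.log (f y + δ) - Real.log (g y + δ)) x = _ := h.fderiv
  simp only [sgrad, hD]
  simp
  ring

/-- with `β(s) = ln(s + δ)`, `β′(s) = 1/(s + δ)`, the pointwise algebraic
identity
`∇[(c − c̄)β′(c)]·J − ∇[(c − c̄)β′(c̄)]·J̄ + ∇(β(c) − β(c̄))·(J − J̄)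
  = (c + c̄ + 2δ) ∇(ln(c + δ) − ln(c̄ + δ)) · (J/(c + δ) − J̄/(c̄ + δ))` holds. -/
theorem renormalized_entropy_flux_identity (δ : ℝ) (hδ : 0 < δ)
    (c cbar : (Fin 3 → ℝ) → ℝ)
    (hc : ContDiff ℝ 1 c) (hcbar : ContDiff ℝ 1 cbar)
    (hc0 : ∀ x, 0 ≤ c x) (hcbar0 : ∀ x, 0 ≤ cbar x)
    (J Jbar : (Fin 3 → ℝ) → Fin 3 → ℝ) :
    ∀ x,
      (∑ α, sgrad (fun y => (c y - cbar y) * (1 / (c y + δ))) x α * J x α)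
        - (∑ α, sgrad (fun y => (c y - cbar y) * (1 / (cbar y + δ))) x α * Jbar x α)
        + (∑ α, sgrad (fun y => Real.log (c y + δ) - Real.log (cbar y + δ)) x α *
            (J x α - Jbar x α))
      = (c x + cbar x + 2 * δ) *
          ∑ α, sgrad (fun y => Real.log (c y + δ) - Real.log (cbar y + δ)) x α *
            (J x α / (c x + δ) - Jbar x α / (cbar x + δ)) := by
  intro x
  have hcx : DifferentiableAt ℝ c x := hc.differentiable one_ne_zero x
  have hbx : DifferentiableAt ℝ cbar x := hcbar.differentiable one_ne_zero x
  have ha : c x + δ ≠ 0 := (add_pos_of_nonneg_of_pos (hc0 x) hδ).ne'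
  have hb : cbar x + δ ≠ 0 := (add_pos_of_nonneg_of_pos (hcbar0 x) hδ).ne'
  rw [← Finset.sum_sub_distrib, ← Finset.sum_add_distrib, Finset.mul_sum]
  refine Finset.sum_congr rfl fun α _ => ?_
  rw [sgrad_sub_mul_one_div hcx hbx hcx ha, sgrad_sub_mul_one_div hcx hbx hbx hb,
    sgrad_log_sub_log hcx hbx ha hb]
  field_simp
  ring
end

section
/- Let n ≥ 2, let D_{ij} = D_{ji} > 0 for i ≠ j, and let d ∈ ℝⁿ have strictly positive entries. Define the symmetric matrix A(d) by A_{ii}(d) = Σ_{k≠i} d_k/D_{ik} and A_{ij}(d) = −√(d_i d_j)/D_{ij} for i ≠ j. Then the range of A(d) is L(d) := { x ∈ ℝⁿ : Σ_i √(d_i) x_i = 0 } and the kernel of A(d) is the one-dimensional span of the vector √d = (√(d_1),…,√(d_n)). -/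
/-!
Writing `z i = √(d i) * w i`, one has
`(A(d) z)_i = √(d i) * ∑_{j ≠ i} d j / D i j * (w i - w j)`, so `A(d)` acts on `w` as a weighted
graph Laplacian with positive weights on the complete graph. By the maximum principle (evaluate at
an index where `w` is maximal) `A(d) z = 0` forces `w` to be constant, which gives the kernel.

By symmetry of `A(d)` and `A(d) √d = 0`, the range is orthogonal to `√d`. For the converse
inclusion, the rank-one perturbation `z ↦ A(d) z + ⟨√d, z⟩ √d` is injective, hence surjective; if
its value at `z` is orthogonal to `√d`, then `⟨√d, z⟩ = 0` and that value is `A(d) z`.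
-/

/-- The symmetric Maxwell–Stefan matrix `A(d)` with entries
`A_{ii}(d) = Σ_{k≠i} d_k/D_{ik}` and `A_{ij}(d) = −√(d_i d_j)/D_{ij}` for `i ≠ j`. -/
noncomputable def MSMatrix {n : ℕ} (D : Fin n → Fin n → ℝ) (d : Fin n → ℝ) :
    Matrix (Fin n) (Fin n) ℝ :=
  Matrix.of fun i j =>
    if i = j then ∑ k ∈ Finset.univ \ {i}, d k / D i k
    else -(Real.sqrt (d i * d j)) / D i j

/-- The action of `A(d)` on a vector written as `√d * w`: a weighted graph Laplacian in `w`. -/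
lemma MSMatrix_mulVec_sqrt_mul {n : ℕ} (D : Fin n → Fin n → ℝ) (d : Fin n → ℝ)
    (hd : ∀ i, 0 < d i) (w : Fin n → ℝ) (i : Fin n) :
    (MSMatrix D d).mulVec (fun j => √(d j) * w j) i
      = √(d i) * ∑ j ∈ Finset.univ \ {i}, d j / D i j * (w i - w j) := by
  have hsplit : (MSMatrix D d).mulVec (fun j => √(d j) * w j) i
      = MSMatrix D d i i * (√(d i) * w i)
        + ∑ j ∈ Finset.univ \ {i}, MSMatrix D d i j * (√(d j) * w j) := by
    rw [Matrix.mulVec, dotProduct]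
    exact Finset.sum_eq_add_sum_sdiff_singleton_of_mem (Finset.mem_univ i) _
  rw [hsplit]
  have hdiag : MSMatrix D d i i = ∑ k ∈ Finset.univ \ {i}, d k / D i k := by simp [MSMatrix]
  rw [hdiag, Finset.sum_mul, Finset.mul_sum, ← Finset.sum_add_distrib]
  refine Finset.sum_congr rfl fun j hj => ?_
  have hij : i ≠ j := by
    rintro rfl
    simp at hj
  have hoff : MSMatrix D d i j = -(√(d i) * √(d j)) / D i j := by
    simp [MSMatrix, hij, Real.sqrt_mul (hd i).le]
  rw [hoff]
  have h := Real.mul_self_sqrt (hd j).le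
  linear_combination (-(√(d i)) * w j / D i j) * h

lemma MSMatrix_mulVec_sqrt {n : ℕ} (D : Fin n → Fin n → ℝ) (d : Fin n → ℝ)
    (hd : ∀ i, 0 < d i) : (MSMatrix D d).mulVec (fun j => √(d j)) = 0 := by
  ext i
  simpa using MSMatrix_mulVec_sqrt_mul D d hd (fun _ => 1) i

lemma MSMatrix_transpose {n : ℕ} (D : Fin n → Fin n → ℝ)
    (hDsymm : ∀ i j, i ≠ j → D i j = D j i) (d : Fin n → ℝ) :
    (MSMatrix D d).transpose = MSMatrix D d := by
  ext i j
  by_cases h : i = j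
  · subst h
    rfl
  · simp [MSMatrix, h, Ne.symm h, mul_comm (d i), hDsymm i j h]

/-- Maximum principle: a vector in the kernel of `A(d)` is a multiple of `√d`. -/
lemma MSMatrix_ker {n : ℕ} (hn : 0 < n) (D : Fin n → Fin n → ℝ)
    (hDpos : ∀ i j, i ≠ j → 0 < D i j) (d : Fin n → ℝ) (hd : ∀ i, 0 < d i)
    (z : Fin n → ℝ) (hz : (MSMatrix D d).mulVec z = 0) :
    ∃ t : ℝ, z = t • fun i => √(d i) := by
  have hs : ∀ i, 0 < √(d i) := fun i => Real.sqrt_pos.2 (hd i)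
  obtain ⟨w, rfl⟩ : ∃ w : Fin n → ℝ, z = fun j => √(d j) * w j :=
    ⟨fun j => z j / √(d j), by ext j; have := (hs j).ne'; field_simp⟩
  haveI : Nonempty (Fin n) := ⟨⟨0, hn⟩⟩
  obtain ⟨i, hi⟩ := Finite.exists_max w
  have h0 := congrFun hz i
  rw [MSMatrix_mulVec_sqrt_mul D d hd w i, Pi.zero_apply, mul_eq_zero] at h0
  have h1 := h0.resolve_left (hs i).ne'
  have hweight : ∀ j ∈ Finset.univ \ {i}, 0 < d j / D i j := fun j hj =>
    div_pos (hd j) (hDpos i j (by rintro rfl; simp at hj))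
  rw [Finset.sum_eq_zero_iff_of_nonneg
    (fun j hj => mul_nonneg (hweight j hj).le (sub_nonneg.2 (hi j)))] at h1
  refine ⟨w i, ?_⟩
  ext j
  have hw : w j = w i := by
    by_cases hj : j = i
    · rw [hj]
    · have hmem : j ∈ Finset.univ \ {i} := by simp [hj]
      exact (sub_eq_zero.1 ((mul_eq_zero.1 (h1 j hmem)).resolve_left (hweight j hmem).ne')).symm
  simp [hw, mul_comm]

/-- the range of `A(d)` is `L(d) = { x : Σ_i √(d_i) x_i = 0 }` and
the kernel of `A(d)` is the span of the vector `√d`. -/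
theorem MSMatrix_range_and_kernel {n : ℕ} (hn : 2 ≤ n)
    (D : Fin n → Fin n → ℝ)
    (hDsymm : ∀ i j, i ≠ j → D i j = D j i)
    (hDpos : ∀ i j, i ≠ j → 0 < D i j)
    (d : Fin n → ℝ) (hd : ∀ i, 0 < d i) :
    Set.range (MSMatrix D d).mulVec
        = {x : Fin n → ℝ | ∑ i, Real.sqrt (d i) * x i = 0} ∧
      {z : Fin n → ℝ | (MSMatrix D d).mulVec z = 0}
        = {z : Fin n → ℝ | ∃ t : ℝ, z = t • fun i => Real.sqrt (d i)} := by
  have hAs := MSMatrix_mulVec_sqrt D d hd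
  have hker := MSMatrix_ker (by omega) D hDpos d hd
  set A := MSMatrix D d with hA
  set s : Fin n → ℝ := fun i => √(d i) with hs
  have horth : ∀ z, s ⬝ᵥ A.mulVec z = 0 := fun z => by
    rw [Matrix.dotProduct_mulVec, ← Matrix.mulVec_transpose, hA,
      MSMatrix_transpose D hDsymm d, ← hA, hAs, zero_dotProduct]
  have hss : s ⬝ᵥ s ≠ 0 := fun h => by
    have h0 := congrFun (dotProduct_self_eq_zero.1 h) ⟨0, by omega⟩
    exact (Real.sqrt_pos.2 (hd _)).ne' h0
  let B : (Fin n → ℝ) →ₗ[ℝ] (Fin n → ℝ) :=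
    A.mulVecLin + (Matrix.vecMulVec s s).mulVecLin
  have hB : ∀ z, B z = A.mulVec z + (s ⬝ᵥ z) • s := fun z => by
    ext i
    simp [B, Matrix.vecMulVec_mulVec, mul_comm]
  -- pairing `B z` with `s` isolates the rank-one part
  have hsB : ∀ z, s ⬝ᵥ B z = 0 → s ⬝ᵥ z = 0 := fun z h => by
    rw [hB, dotProduct_add, horth, zero_add, dotProduct_smul, smul_eq_mul] at h
    exact (mul_eq_zero.1 h).resolve_right hss
  have hinj : Function.Injective B := by
    rw [injective_iff_map_eq_zero]
    intro z hz
    have hsz := hsB z (by rw [hz, dotProduct_zero])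
    rw [hB, hsz, zero_smul, add_zero] at hz
    obtain ⟨t, rfl⟩ := hker z hz
    rw [dotProduct_smul, smul_eq_mul] at hsz
    rw [(mul_eq_zero.1 hsz).resolve_right hss, zero_smul]
  constructor
  · ext x
    constructor
    · rintro ⟨z, rfl⟩
      exact horth z
    · intro hx
      obtain ⟨z, rfl⟩ := LinearMap.injective_iff_surjective.1 hinj x
      refine ⟨z, ?_⟩
      rw [hB, hsB z hx, zero_smul, add_zero]
  · ext z
    constructor
    · exact hker z
    · rintro ⟨t, rfl⟩
      change A.mulVec (t • s) = 0
      rw [Matrix.mulVec_smul, hAs, smul_zero]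
end

section
/- Let n ≥ 2, let D_{ij} = D_{ji} > 0 for i ≠ j and set μ = min_{i≠j} 1/D_{ij}. Let d ∈ ℝⁿ have strictly positive entries with Σ_i d_i = s ≥ 1, and define A(d) by A_{ii}(d) = Σ_{k≠i} d_k/D_{ik}, A_{ij}(d) = −√(d_i d_j)/D_{ij} for i ≠ j. Then for every z ∈ ℝⁿ, z⊤ A(d) z ≥ s μ |P_{L(d)} z|² ≥ μ |P_{L(d)} z|², where P_{L(d)} is the orthogonal projection onto L(d) = { x ∈ ℝⁿ : Σ_i √(d_i) x_i = 0 }, with entries (P_{L(d)})_{ij} = δ_{ij} − √(d_i d_j)/s. -/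
/-- Lagrange's identity, for the residual of the projection of `z` along `q`, where `|q|² = s`. -/
lemma two_mul_sum_sq_residual {n : ℕ} (q z : Fin n → ℝ) (s : ℝ) (hs : s ≠ 0)
    (hq : ∑ i, q i ^ 2 = s) :
    2 * (s * ∑ i, (z i - q i * (∑ j, q j * z j) / s) ^ 2) =
      ∑ i, ∑ j, (q j * z i - q i * z j) ^ 2 := by
  set c := ∑ j, q j * z j with hc
  have h1 : ∑ i, (z i - q i * c / s) ^ 2 = ∑ i, z i ^ 2 - c ^ 2 / s := by
    have : ∀ i, (z i - q i * c / s) ^ 2 =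
        z i ^ 2 - 2 * c / s * (q i * z i) + c ^ 2 / s ^ 2 * q i ^ 2 := fun i => by ring
    simp only [this, Finset.sum_add_distrib, Finset.sum_sub_distrib, ← Finset.mul_sum]
    rw [hq, ← hc]
    field_simp
    ring
  have h2 : ∀ i, ∑ j, (q j * z i - q i * z j) ^ 2 =
      s * z i ^ 2 - 2 * c * (q i * z i) + (∑ j, z j ^ 2) * q i ^ 2 := fun i => by
    have : ∀ j, (q j * z i - q i * z j) ^ 2 =
        z i ^ 2 * q j ^ 2 - 2 * (q i * z i) * (q j * z j) + q i ^ 2 * z j ^ 2 := fun j => by ring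
    simp only [this, Finset.sum_add_distrib, Finset.sum_sub_distrib, ← Finset.mul_sum]
    rw [hq, ← hc]
    ring
  simp only [h2, Finset.sum_add_distrib, Finset.sum_sub_distrib, ← Finset.mul_sum]
  rw [hq, ← hc, h1]
  field_simp
  ring

lemma MSMatrix_mulVec {n : ℕ} (D : Fin n → Fin n → ℝ) (d : Fin n → ℝ) (hd : ∀ i, 0 < d i)
    (z : Fin n → ℝ) (i : Fin n) :
    (MSMatrix D d).mulVec z i = ∑ j, (if i = j then 0 else 1 / D i j) *
      (√(d j) ^ 2 * z i - √(d i) * √(d j) * z j) := by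
  have hdiag : MSMatrix D d i i = ∑ j, if i = j then 0 else d j / D i j := by
    simp only [MSMatrix, Matrix.of_apply, if_true]
    rw [← Finset.sum_subset (Finset.sdiff_subset (s := Finset.univ) (t := {i}))]
    · refine Finset.sum_congr rfl fun j hj => ?_
      have : i ≠ j := by simpa [eq_comm] using hj
      rw [if_neg this]
    · intro j _ hj
      have : i = j := by simpa [eq_comm] using hj
      rw [if_pos this]
  have hsplit : ∀ j, MSMatrix D d i j * z j = (if i = j then MSMatrix D d i i * z i else 0) +
      (if i = j then 0 else 1 / D i j) * (-(√(d i) * √(d j) * z j)) := fun j => by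
    by_cases h : i = j
    · subst h; simp
    · simp only [MSMatrix, Matrix.of_apply, if_neg h, Real.sqrt_mul (hd i).le]
      ring
  simp only [Matrix.mulVec, dotProduct]
  rw [Finset.sum_congr rfl fun j _ => hsplit j, Finset.sum_add_distrib,
    Finset.sum_ite_eq, if_pos (Finset.mem_univ i), hdiag, Finset.sum_mul,
    ← Finset.sum_add_distrib]
  refine Finset.sum_congr rfl fun j _ => ?_
  rw [Real.sq_sqrt (hd j).le]
  split_ifs <;> ring

lemma two_mul_MSMatrix_quadForm {n : ℕ} (D : Fin n → Fin n → ℝ)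
    (hDsymm : ∀ i j, i ≠ j → D i j = D j i) (d : Fin n → ℝ) (hd : ∀ i, 0 < d i)
    (z : Fin n → ℝ) :
    2 * ∑ i, z i * (MSMatrix D d).mulVec z i =
      ∑ i, ∑ j, (if i = j then 0 else 1 / D i j) * (√(d j) * z i - √(d i) * z j) ^ 2 := by
  rw [two_mul]
  simp only [MSMatrix_mulVec D d hd, Finset.mul_sum]
  -- Exchange the names of `i` and `j` in one of the two copies of the sum.
  conv_lhs => enter [2]; rw [Finset.sum_comm]
  simp only [← Finset.sum_add_distrib]
  refine Finset.sum_congr rfl fun i _ => Finset.sum_congr rfl fun j _ => ?_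
  by_cases h : i = j
  · simp [h]
  · rw [if_neg h, if_neg (Ne.symm h), hDsymm i j h]
    ring

/-- the spectral-gap estimate
`z⊤ A(d) z ≥ s μ |P_{L(d)} z|² ≥ μ |P_{L(d)} z|²` for `μ = min_{i≠j} 1/D_{ij}`,
`Σ_i d_i = s ≥ 1` and `P_{L(d)}` the orthogonal projection onto
`L(d) = { x : Σ_i √(d_i) x_i = 0 }`, with entries `δ_{ij} − √(d_i d_j)/s`. -/
theorem MSMatrix_spectral_gap {n : ℕ} (hn : 2 ≤ n)
    (D : Fin n → Fin n → ℝ)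
    (hDsymm : ∀ i j, i ≠ j → D i j = D j i)
    (hDpos : ∀ i j, i ≠ j → 0 < D i j)
    (μ : ℝ) (hμ : μ = sInf {x : ℝ | ∃ i j : Fin n, i ≠ j ∧ x = 1 / D i j})
    (s : ℝ) (hs : 1 ≤ s)
    (d : Fin n → ℝ) (hd : ∀ i, 0 < d i) (hsum : ∑ i, d i = s)
    (z : Fin n → ℝ) :
    let P : Matrix (Fin n) (Fin n) ℝ :=
      Matrix.of fun i j => (if i = j then (1 : ℝ) else 0) - Real.sqrt (d i * d j) / s
    s * μ * (∑ i, (P.mulVec z i) ^ 2) ≤ ∑ i, z i * ((MSMatrix D d).mulVec z i) ∧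
      μ * (∑ i, (P.mulVec z i) ^ 2) ≤ s * μ * (∑ i, (P.mulVec z i) ^ 2) := by
  intro P
  have hs0 : s ≠ 0 := by positivity
  have hlb : ∀ x ∈ {x : ℝ | ∃ i j : Fin n, i ≠ j ∧ x = 1 / D i j}, 0 ≤ x := by
    rintro x ⟨i, j, hij, rfl⟩
    exact (one_div_pos.2 (hDpos i j hij)).le
  have hμ0 : 0 ≤ μ := hμ ▸ Real.sInf_nonneg hlb
  have hμle : ∀ i j, i ≠ j → μ ≤ 1 / D i j := fun i j hij =>
    hμ ▸ csInf_le ⟨0, hlb⟩ ⟨i, j, hij, rfl⟩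
  have hP : ∀ i, P.mulVec z i = z i - √(d i) * (∑ j, √(d j) * z j) / s := fun i => by
    simp only [P, Matrix.mulVec, dotProduct, Matrix.of_apply, sub_mul, Finset.sum_sub_distrib,
      ite_mul, one_mul, zero_mul, Finset.sum_ite_eq, Finset.mem_univ, if_true, Finset.mul_sum,
      Finset.sum_div]
    congr 1
    refine Finset.sum_congr rfl fun j _ => ?_
    rw [Real.sqrt_mul (hd i).le]
    ring
  have hq : ∑ i, √(d i) ^ 2 = s := by
    rw [← hsum]
    exact Finset.sum_congr rfl fun i _ => Real.sq_sqrt (hd i).le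
  have hLag := two_mul_sum_sq_residual (fun i => √(d i)) z s hs0 hq
  have hquad := two_mul_MSMatrix_quadForm D hDsymm d hd z
  have hnn : 0 ≤ ∑ i, (P.mulVec z i) ^ 2 := Finset.sum_nonneg fun i _ => sq_nonneg _
  refine ⟨?_, by nlinarith [mul_nonneg (mul_nonneg hμ0 hnn) (sub_nonneg.2 hs)]⟩
  simp only [← hP] at hLag
  have hcmp : μ * ∑ i, ∑ j, (√(d j) * z i - √(d i) * z j) ^ 2 ≤
      ∑ i, ∑ j, (if i = j then 0 else 1 / D i j) * (√(d j) * z i - √(d i) * z j) ^ 2 := by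
    simp only [Finset.mul_sum]
    refine Finset.sum_le_sum fun i _ => Finset.sum_le_sum fun j _ => ?_
    by_cases h : i = j
    · simp [h]
    · rw [if_neg h]
      exact mul_le_mul_of_nonneg_right (hμle i j h) (sq_nonneg _)
  rw [← hLag, ← hquad] at hcmp
  linarith
end

section
/- Let n ≥ 2, δ > 0, K ≥ 0, and let d, d̄ ∈ ℝⁿ satisfy d_i ≥ δ, d̄_i ≥ δ for all i and Σ_i d_i = Σ_i d̄_i = 1 + nδ. Let v, v̄ : Fin n → ℝ³ satisfy Σ_i d_i v_i = 0, Σ_i d̄_i v̄_i = 0, and |v̄_j| ≤ K for all j. Set Y_i = √(d_i)(v_i − v̄_i) and let P⊥ be the matrix with entries (P⊥)_{ij} = √(d_i d_j)/(1 + nδ). Then (P⊥ Y)_i = (√(d_i)/(1 + nδ)) Σ_j (d̄_j − d_j) v̄_j for each i, and consequently Σ_i |(P⊥Y)_i|² ≤ n K² Σ_j |d_j − d̄_j|². -/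
/-!
Write `S = 1 + nδ = ∑ d_i`. Since `√(d_i d_j) √d_j = √d_i d_j`, the `i`-th component of `P⊥Y` is
`(√d_i / S) ∑_j d_j (v_j - v̄_j)`, and the two zero-flux constraints turn the sum into
`w = ∑_j (d̄_j - d_j) v̄_j`. Hence `∑_i |(P⊥Y)_i|² = |w|² / S ≤ |w|²` because `S ≥ 1`, while
`|w|² ≤ K² (∑_j |d_j - d̄_j|)² ≤ n K² ∑_j |d_j - d̄_j|²` by the triangle and Cauchy–Schwarz
inequalities.
-/

/-- with `Y_i = √(d_i)(v_i − v̄_i)` and `P⊥` the matrix with entries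
`(P⊥)_{ij} = √(d_i d_j)/(1+nδ)`, one has
`(P⊥Y)_i = (√(d_i)/(1+nδ)) Σ_j (d̄_j − d_j) v̄_j` and consequently
`Σ_i |(P⊥Y)_i|² ≤ n K² Σ_j |d_j − d̄_j|²`. -/
theorem projection_of_relative_flux {n : ℕ} (hn : 2 ≤ n) (δ K : ℝ)
    (hδ : 0 < δ) (hK : 0 ≤ K)
    (d dbar : Fin n → ℝ)
    (hd : ∀ i, δ ≤ d i) (hdbar : ∀ i, δ ≤ dbar i)
    (hsum : ∑ i, d i = 1 + n * δ) (hsumbar : ∑ i, dbar i = 1 + n * δ)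
    (v vbar : Fin n → EuclideanSpace ℝ (Fin 3))
    (hv : ∑ i, d i • v i = 0) (hvbar : ∑ i, dbar i • vbar i = 0)
    (hvbarK : ∀ j, ‖vbar j‖ ≤ K) :
    (∀ i, (∑ j, (Real.sqrt (d i * d j) / (1 + n * δ)) •
            (Real.sqrt (d j) • (v j - vbar j)))
        = (Real.sqrt (d i) / (1 + n * δ)) • ∑ j, (dbar j - d j) • vbar j) ∧
      ∑ i, ‖∑ j, (Real.sqrt (d i * d j) / (1 + n * δ)) •
            (Real.sqrt (d j) • (v j - vbar j))‖ ^ 2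
        ≤ n * K ^ 2 * ∑ j, (d j - dbar j) ^ 2 := by
  have hd0 : ∀ i, 0 ≤ d i := fun i => hδ.le.trans (hd i)
  have hS1 : (1 : ℝ) ≤ 1 + n * δ := le_add_of_nonneg_right (by positivity)
  have hw : ∑ j, d j • (v j - vbar j) = ∑ j, (dbar j - d j) • vbar j := by
    simp only [smul_sub, sub_smul, Finset.sum_sub_distrib, hv, hvbar]
  have key : ∀ i, (∑ j, (Real.sqrt (d i * d j) / (1 + n * δ)) •
            (Real.sqrt (d j) • (v j - vbar j)))
        = (Real.sqrt (d i) / (1 + n * δ)) • ∑ j, (dbar j - d j) • vbar j := by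
    intro i
    rw [← hw, Finset.smul_sum]
    refine Finset.sum_congr rfl fun j _ => ?_
    rw [smul_smul, smul_smul, Real.sqrt_mul (hd0 i)]
    congr 1
    rw [div_mul_eq_mul_div, mul_assoc, Real.mul_self_sqrt (hd0 j), div_mul_eq_mul_div]
  refine ⟨key, ?_⟩
  set w := ∑ j, (dbar j - d j) • vbar j with hwdef
  have hwnorm : ‖w‖ ≤ K * ∑ j, |d j - dbar j| := by
    rw [hwdef, Finset.mul_sum]
    refine norm_sum_le_of_le _ fun j _ => ?_
    rw [norm_smul, Real.norm_eq_abs, abs_sub_comm, mul_comm]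
    exact mul_le_mul_of_nonneg_right (hvbarK j) (abs_nonneg _)
  have hcs : (∑ j, |d j - dbar j|) ^ 2 ≤ n * ∑ j, (d j - dbar j) ^ 2 := by
    simpa using sq_sum_le_card_mul_sum_sq (s := Finset.univ) (f := fun j => |d j - dbar j|)
  have hS0 : (1 + n * δ : ℝ) ≠ 0 := by positivity
  calc ∑ i, ‖∑ j, (Real.sqrt (d i * d j) / (1 + n * δ)) •
            (Real.sqrt (d j) • (v j - vbar j))‖ ^ 2
      = ∑ i, d i * (‖w‖ ^ 2 / (1 + n * δ) ^ 2) := by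
        refine Finset.sum_congr rfl fun i _ => ?_
        rw [key i, norm_smul, mul_pow, Real.norm_eq_abs, sq_abs, div_pow, Real.sq_sqrt (hd0 i)]
        ring
    _ = ‖w‖ ^ 2 / (1 + n * δ) := by
        rw [← Finset.sum_mul, hsum]
        field_simp
    _ ≤ ‖w‖ ^ 2 := div_le_self (by positivity) hS1
    _ ≤ (K * ∑ j, |d j - dbar j|) ^ 2 := by gcongr
    _ = K ^ 2 * (∑ j, |d j - dbar j|) ^ 2 := mul_pow _ _ _
    _ ≤ K ^ 2 * (n * ∑ j, (d j - dbar j) ^ 2) := by gcongr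
    _ = n * K ^ 2 * ∑ j, (d j - dbar j) ^ 2 := by ring
end

section
/- Let n ≥ 2, δ > 0, K ≥ 0, let D_{ij} = D_{ji} > 0 for i ≠ j and μ = min_{i≠j} 1/D_{ij}. Let d, d̄ ∈ ℝⁿ satisfy d_i ≥ δ, d̄_i ≥ δ and Σ_i d_i = Σ_i d̄_i = 1 + nδ, and let v, v̄ : Fin n → ℝ³ satisfy Σ_i d_i v_i = 0, Σ_i d̄_i v̄_i = 0, and |v_j| ≤ K, |v̄_j| ≤ K for all j. Then Σ_i Σ_{j≠i} (1/(2D_{ij}))(d_i d_j + d̄_i d̄_j) |(v_i − v̄_i) − (v_j − v̄_j)|² ≥ μ Σ_i (d_i + d̄_i)|v_i − v̄_i|² − (2μnK²) Σ_j |d_j − d̄_j|². -/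
/-!
Put `w = v - v̄` and `S = 1 + nδ ≥ 1`. Bounding every `1 / D i j` below by `μ`, the dissipation is at
least `μ / 2` times the full double sums of `d_i d_j |w_i - w_j|²` and `d̄_i d̄_j |w_i - w_j|²`.
By the variance identity `sum_sum_mul_norm_sub_sq`, each of these equals
`2 (S Σ d_i |w_i|² - |Σ d_i w_i|²)`, and correspondingly with `d̄`. The constraints give
`Σ d_i w_i = -Σ (d_i - d̄_i) v̄_i` and `Σ d̄_i w_i = -Σ (d_i - d̄_i) v_i`, so by Cauchy–Schwarz each
defect `|Σ d_i w_i|²`, `|Σ d̄_i w_i|²` is at most `n K² Σ (d_j - d̄_j)²`.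
-/

/-- Weighted variance identity; the weights need not be normalized. -/
lemma sum_sum_mul_norm_sub_sq {ι E : Type*} [Fintype ι] [NormedAddCommGroup E]
    [InnerProductSpace ℝ E] (a : ι → ℝ) (w : ι → E) :
    ∑ i, ∑ j, a i * a j * ‖w i - w j‖ ^ 2
      = 2 * ((∑ i, a i) * (∑ i, a i * ‖w i‖ ^ 2) - ‖∑ i, a i • w i‖ ^ 2) := by
  have h1 : ‖∑ i, a i • w i‖ ^ 2 = ∑ i, ∑ j, a i * a j * inner ℝ (w i) (w j) := by
    rw [← real_inner_self_eq_norm_sq, sum_inner]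
    refine Finset.sum_congr rfl fun i _ => ?_
    rw [inner_sum]
    refine Finset.sum_congr rfl fun j _ => ?_
    rw [real_inner_smul_left, real_inner_smul_right]
    ring
  have h2 : (∑ i, a i) * (∑ i, a i * ‖w i‖ ^ 2) = ∑ i, ∑ j, a i * a j * ‖w j‖ ^ 2 := by
    rw [Finset.sum_mul_sum]
    simp only [mul_assoc]
  have h3 : (∑ i, a i) * (∑ i, a i * ‖w i‖ ^ 2) = ∑ i, ∑ j, a i * a j * ‖w i‖ ^ 2 := by
    rw [h2, Finset.sum_comm]
    simp only [mul_comm]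
  have h4 : ∑ i, ∑ j, a i * a j * ‖w i - w j‖ ^ 2
      = ∑ i, ∑ j, a i * a j * ‖w i‖ ^ 2 - 2 * ∑ i, ∑ j, a i * a j * inner ℝ (w i) (w j)
        + ∑ i, ∑ j, a i * a j * ‖w j‖ ^ 2 := by
    simp only [Finset.mul_sum, ← Finset.sum_sub_distrib, ← Finset.sum_add_distrib]
    refine Finset.sum_congr rfl fun i _ => Finset.sum_congr rfl fun j _ => ?_
    rw [norm_sub_sq_real]
    ring
  rw [h4, ← h1, ← h2, ← h3]
  ring

lemma norm_sum_smul_sq_le {n : ℕ} {E : Type*} [NormedAddCommGroup E] [NormedSpace ℝ E]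
    (e : Fin n → ℝ) (u : Fin n → E) (K : ℝ) (hu : ∀ j, ‖u j‖ ≤ K) :
    ‖∑ j, e j • u j‖ ^ 2 ≤ n * K ^ 2 * ∑ j, e j ^ 2 := by
  have h1 : ‖∑ j, e j • u j‖ ≤ ∑ j, |e j| * K := by
    refine (norm_sum_le _ _).trans (Finset.sum_le_sum fun j _ => ?_)
    rw [norm_smul, Real.norm_eq_abs]
    exact mul_le_mul_of_nonneg_left (hu j) (abs_nonneg _)
  have h2 : (∑ j, |e j|) ^ 2 ≤ n * ∑ j, e j ^ 2 := by
    simpa using sq_sum_le_card_mul_sum_sq (s := Finset.univ) (f := fun j => |e j|)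
  calc ‖∑ j, e j • u j‖ ^ 2 ≤ (∑ j, |e j| * K) ^ 2 := by gcongr
    _ = K ^ 2 * (∑ j, |e j|) ^ 2 := by rw [← Finset.sum_mul]; ring
    _ ≤ K ^ 2 * (n * ∑ j, e j ^ 2) := by gcongr
    _ = _ := by ring

/-- coercivity estimate for the dissipation of the symmetrized relative
entropy between two states `(d,v)` and `(d̄,v̄)` of the shifted Maxwell–Stefan system:
`Σ_i Σ_{j≠i} (1/(2D_{ij}))(d_i d_j + d̄_i d̄_j)|(v_i − v̄_i) − (v_j − v̄_j)|²
  ≥ μ Σ_i (d_i + d̄_i)|v_i − v̄_i|² − 2μnK² Σ_j |d_j − d̄_j|²`. -/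
theorem dissipation_coercivity {n : ℕ} (hn : 2 ≤ n) (δ K : ℝ)
    (hδ : 0 < δ) (hK : 0 ≤ K)
    (D : Fin n → Fin n → ℝ)
    (hDsymm : ∀ i j, i ≠ j → D i j = D j i)
    (hDpos : ∀ i j, i ≠ j → 0 < D i j)
    (μ : ℝ) (hμ : μ = sInf {x : ℝ | ∃ i j : Fin n, i ≠ j ∧ x = 1 / D i j})
    (d dbar : Fin n → ℝ)
    (hd : ∀ i, δ ≤ d i) (hdbar : ∀ i, δ ≤ dbar i)
    (hsum : ∑ i, d i = 1 + n * δ) (hsumbar : ∑ i, dbar i = 1 + n * δ)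
    (v vbar : Fin n → EuclideanSpace ℝ (Fin 3))
    (hv : ∑ i, d i • v i = 0) (hvbar : ∑ i, dbar i • vbar i = 0)
    (hvK : ∀ j, ‖v j‖ ≤ K) (hvbarK : ∀ j, ‖vbar j‖ ≤ K) :
    μ * (∑ i, (d i + dbar i) * ‖v i - vbar i‖ ^ 2)
        - 2 * μ * n * K ^ 2 * ∑ j, (d j - dbar j) ^ 2
      ≤ ∑ i, ∑ j ∈ Finset.univ \ {i},
          (1 / (2 * D i j)) * (d i * d j + dbar i * dbar j) *
            ‖(v i - vbar i) - (v j - vbar j)‖ ^ 2 := by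
  have hμle : ∀ i j, i ≠ j → μ ≤ 1 / D i j := by
    intro i j hij
    rw [hμ]
    refine csInf_le ⟨0, ?_⟩ ⟨i, j, hij, rfl⟩
    rintro x ⟨a, b, hab, rfl⟩
    exact (one_div_pos.2 (hDpos a b hab)).le
  have hμ0 : 0 ≤ μ := by
    rw [hμ]
    refine Real.sInf_nonneg ?_
    rintro x ⟨a, b, hab, rfl⟩
    exact (one_div_pos.2 (hDpos a b hab)).le
  have hd0 : ∀ i, 0 ≤ d i := fun i => hδ.le.trans (hd i)
  have hdbar0 : ∀ i, 0 ≤ dbar i := fun i => hδ.le.trans (hdbar i)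
  set w : Fin n → EuclideanSpace ℝ (Fin 3) := fun i => v i - vbar i with hw
  have hlower : μ / 2 * (∑ i, ∑ j, d i * d j * ‖w i - w j‖ ^ 2)
        + μ / 2 * (∑ i, ∑ j, dbar i * dbar j * ‖w i - w j‖ ^ 2)
      ≤ ∑ i, ∑ j ∈ Finset.univ \ {i},
          (1 / (2 * D i j)) * (d i * d j + dbar i * dbar j) * ‖w i - w j‖ ^ 2 := by
    simp only [Finset.mul_sum, ← Finset.sum_add_distrib]
    refine Finset.sum_le_sum fun i _ => ?_
    -- The diagonal term vanishes, so it may be dropped from the full sum.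
    rw [← Finset.sum_subset (Finset.subset_univ (Finset.univ \ {i}))]
    · refine Finset.sum_le_sum fun j hj => ?_
      have hij : i ≠ j := by
        rintro rfl
        simp at hj
      have hc : μ / 2 ≤ 1 / (2 * D i j) := by
        have h := hμle i j hij
        have : 1 / (2 * D i j) = (1 / D i j) / 2 := by rw [div_div, mul_comm]
        linarith
      have hnn : 0 ≤ (d i * d j + dbar i * dbar j) * ‖w i - w j‖ ^ 2 :=
        mul_nonneg (add_nonneg (mul_nonneg (hd0 i) (hd0 j))
          (mul_nonneg (hdbar0 i) (hdbar0 j))) (sq_nonneg _)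
      have := mul_le_mul_of_nonneg_right hc hnn
      linarith
    · intro j _ hj
      have hji : j = i := by simpa using hj
      simp [hji]
  have hwd : ∑ i, d i • w i = -∑ i, (d i - dbar i) • vbar i := by
    simp only [hw, smul_sub, sub_smul, Finset.sum_sub_distrib, hv, hvbar]
    simp
  have hwdbar : ∑ i, dbar i • w i = -∑ i, (d i - dbar i) • v i := by
    simp only [hw, smul_sub, sub_smul, Finset.sum_sub_distrib, hv, hvbar]
    simp
  have hE1 := norm_sum_smul_sq_le (fun i => d i - dbar i) vbar K hvbarK
  have hE2 := norm_sum_smul_sq_le (fun i => d i - dbar i) v K hvK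
  rw [sum_sum_mul_norm_sub_sq, sum_sum_mul_norm_sub_sq, hsum, hsumbar, hwd, hwdbar,
    norm_neg, norm_neg] at hlower
  have hsplit : ∑ i, (d i + dbar i) * ‖v i - vbar i‖ ^ 2
      = ∑ i, d i * ‖w i‖ ^ 2 + ∑ i, dbar i * ‖w i‖ ^ 2 := by
    simp only [add_mul, Finset.sum_add_distrib, hw]
  have hA : 0 ≤ ∑ i, d i * ‖w i‖ ^ 2 :=
    Finset.sum_nonneg fun i _ => mul_nonneg (hd0 i) (sq_nonneg _)
  have hB : 0 ≤ ∑ i, dbar i * ‖w i‖ ^ 2 :=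
    Finset.sum_nonneg fun i _ => mul_nonneg (hdbar0 i) (sq_nonneg _)
  have hnδ : 0 ≤ (n : ℝ) * δ := by positivity
  refine le_trans ?_ hlower
  rw [hsplit]
  have h1 := mul_le_mul_of_nonneg_left hE1 hμ0
  have h2 := mul_le_mul_of_nonneg_left hE2 hμ0
  -- The surplus `S - 1 = nδ` contributes a nonnegative term.
  have h3 := mul_nonneg hμ0 (mul_nonneg hnδ (add_nonneg hA hB))
  linarith
end

section
/- Let n ≥ 2, K ≥ 0, let D_{ij} = D_{ji} > 0 for i ≠ j, and set μ = min_{i≠j} 1/D_{ij}, M = max_{i≠j} 1/D_{ij}. Let d, d̄ ∈ ℝⁿ satisfy 0 < d_i ≤ 2, 0 < d̄_i ≤ 2 for all i, and let v, v̄ : Fin n → ℝ³ satisfy |v̄_j| ≤ K for all j. Then Σ_i Σ_{j≠i} (d_i/D_{ij}) |d_j − d̄_j| · |v_i − v̄_i| · |v̄_i − v̄_j| ≤ (μ/4) Σ_i d_i |v_i − v̄_i|² + (8 n² M² K²/μ) Σ_j |d_j − d̄_j|². -/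
/-!
Each `1 / D i j` is at most `M` and each `‖vbar i - vbar j‖` at most `2K`, so with
`S = ∑ j, |d j - dbar j|` and `a i = ‖v i - vbar i‖` the `i`-th inner sum is at most
`d i * (a i * (2KMS))`. Young's inequality `a X ≤ (μ/4) a² + X²/μ`, the bound `d i ≤ 2` and
`S² ≤ n ∑ j, (d j - dbar j)²` (Jensen) bound this by
`(μ/4) d i (a i)² + (8 n M² K² / μ) ∑ j, (d j - dbar j)²`; summing over the `n` indices `i`
gives the second factor `n`. Young's inequality needs `0 < μ`, which holds because the
infimum over the finite nonempty set of the `1 / D i j` is attained.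
-/

/-- estimate of the error term `J₁` in the symmetrized relative entropy
inequality:
`Σ_i Σ_{j≠i} (d_i/D_{ij}) |d_j − d̄_j| |v_i − v̄_i| |v̄_i − v̄_j|
  ≤ (μ/4) Σ_i d_i |v_i − v̄_i|² + (8n²M²K²/μ) Σ_j |d_j − d̄_j|²`,
where `μ = min_{i≠j} 1/D_{ij}` and `M = max_{i≠j} 1/D_{ij}`. -/
theorem error_term_J1_estimate {n : ℕ} (hn : 2 ≤ n) (K : ℝ) (hK : 0 ≤ K)
    (D : Fin n → Fin n → ℝ)
    (hDsymm : ∀ i j, i ≠ j → D i j = D j i)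
    (hDpos : ∀ i j, i ≠ j → 0 < D i j)
    (μ M : ℝ)
    (hμ : μ = sInf {x : ℝ | ∃ i j : Fin n, i ≠ j ∧ x = 1 / D i j})
    (hM : M = sSup {x : ℝ | ∃ i j : Fin n, i ≠ j ∧ x = 1 / D i j})
    (d dbar : Fin n → ℝ)
    (hd0 : ∀ i, 0 < d i) (hd2 : ∀ i, d i ≤ 2)
    (hdbar0 : ∀ i, 0 < dbar i) (hdbar2 : ∀ i, dbar i ≤ 2)
    (v vbar : Fin n → EuclideanSpace ℝ (Fin 3))
    (hvbarK : ∀ j, ‖vbar j‖ ≤ K) :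
    ∑ i, ∑ j ∈ Finset.univ \ {i},
        (d i / D i j) * |d j - dbar j| * ‖v i - vbar i‖ * ‖vbar i - vbar j‖
      ≤ (μ / 4) * ∑ i, d i * ‖v i - vbar i‖ ^ 2
        + (8 * n ^ 2 * M ^ 2 * K ^ 2 / μ) * ∑ j, (d j - dbar j) ^ 2 := by
  set T : Set ℝ := {x : ℝ | ∃ i j : Fin n, i ≠ j ∧ x = 1 / D i j} with hT
  have hfin : T.Finite := by
    refine (Set.finite_range (fun p : Fin n × Fin n => 1 / D p.1 p.2)).subset ?_
    rintro x ⟨i, j, -, rfl⟩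
    exact ⟨(i, j), rfl⟩
  have hne : T.Nonempty :=
    ⟨_, ⟨0, by omega⟩, ⟨1, by omega⟩, by simp, rfl⟩
  have hμpos : 0 < μ := by
    obtain ⟨i, j, hij, h⟩ := hne.csInf_mem hfin
    rw [hμ, h]
    exact one_div_pos.mpr (hDpos i j hij)
  have hDM : ∀ i j, i ≠ j → 1 / D i j ≤ M := fun i j hij => by
    rw [hM]
    exact le_csSup hfin.bddAbove ⟨i, j, hij, rfl⟩
  have hMnn : 0 ≤ M := by
    obtain ⟨x, i, j, hij, -⟩ := hne
    exact (one_div_pos.mpr (hDpos i j hij)).le.trans (hDM i j hij)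
  set S : ℝ := ∑ j, |d j - dbar j| with hS
  set Q : ℝ := ∑ j, (d j - dbar j) ^ 2 with hQ
  have hSQ : S ^ 2 ≤ n * Q := by
    simpa [sq_abs] using
      sq_sum_le_card_mul_sum_sq (s := Finset.univ) (f := fun j => |d j - dbar j|)
  have hinner : ∀ i, ∑ j ∈ Finset.univ \ {i},
      (d i / D i j) * |d j - dbar j| * ‖v i - vbar i‖ * ‖vbar i - vbar j‖
      ≤ d i * (‖v i - vbar i‖ * (2 * K * M * S)) := fun i => by
    have hdi := (hd0 i).le
    calc _ ≤ ∑ j ∈ Finset.univ \ {i},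
          (d i * M) * |d j - dbar j| * ‖v i - vbar i‖ * (2 * K) := by
          refine Finset.sum_le_sum fun j hj => ?_
          have hij : i ≠ j := by
            rintro rfl
            simp at hj
          have h1 : d i / D i j ≤ d i * M := by
            rw [div_eq_mul_one_div]
            exact mul_le_mul_of_nonneg_left (hDM i j hij) hdi
          have h2 : ‖vbar i - vbar j‖ ≤ 2 * K := by
            linarith [norm_sub_le (vbar i) (vbar j), hvbarK i, hvbarK j]
          gcongr
      _ ≤ ∑ j, (d i * M) * |d j - dbar j| * ‖v i - vbar i‖ * (2 * K) :=
          Finset.sum_le_sum_of_subset_of_nonneg (Finset.subset_univ _)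
            fun j _ _ => by positivity
      _ = d i * (‖v i - vbar i‖ * (2 * K * M * S)) := by
          rw [← Finset.sum_mul, ← Finset.sum_mul, ← Finset.mul_sum]
          ring
  have hyoung : ∀ i, d i * (‖v i - vbar i‖ * (2 * K * M * S))
      ≤ μ / 4 * (d i * ‖v i - vbar i‖ ^ 2) + 8 * n * M ^ 2 * K ^ 2 / μ * Q := fun i => by
    have hdi := (hd0 i).le
    set a := ‖v i - vbar i‖
    set X := 2 * K * M * S with hX
    have hY : a * X ≤ μ / 4 * a ^ 2 + X ^ 2 / μ := by
      have h : μ / 4 * a ^ 2 + X ^ 2 / μ - a * X = (μ * a / 2 - X) ^ 2 / μ := by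
        field_simp
        ring
      have : 0 ≤ (μ * a / 2 - X) ^ 2 / μ := by positivity
      linarith
    calc d i * (a * X) ≤ d i * (μ / 4 * a ^ 2 + X ^ 2 / μ) := by gcongr
      _ = μ / 4 * (d i * a ^ 2) + d i * (X ^ 2 / μ) := by ring
      _ ≤ μ / 4 * (d i * a ^ 2) + 2 * (4 * K ^ 2 * M ^ 2 * (n * Q) / μ) := by
          have hX2 : X ^ 2 ≤ 4 * K ^ 2 * M ^ 2 * (n * Q) := by
            calc X ^ 2 = 4 * K ^ 2 * M ^ 2 * S ^ 2 := by rw [hX]; ring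
              _ ≤ _ := by gcongr
          have := hd2 i
          gcongr
      _ = _ := by ring
  calc _ ≤ ∑ i, (μ / 4 * (d i * ‖v i - vbar i‖ ^ 2) + 8 * n * M ^ 2 * K ^ 2 / μ * Q) :=
        Finset.sum_le_sum fun i _ => (hinner i).trans (hyoung i)
    _ = _ := by
        rw [Finset.sum_add_distrib, ← Finset.mul_sum, Finset.sum_const, Finset.card_univ,
          Fintype.card_fin, nsmul_eq_mul]
        ring
end
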